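/- arXiv:1812.04911 — 2 statements merged into one kernel-verified Lean document; each statement's English description precedes it below -/
import Mathlib

section
/- For every finite set X of n points in the plane ℝ² in general position (no three points on a line), there exist ⌊n/3⌋ pairwise vertex-disjoint triples of points of X such that the triangles they span are pairwise crossing, i.e., for any two of these triangles the topological boundaries of their convex hulls have nonempty intersection. -/
/-- A set `Y` of points in `ℝ^d` is in general position if every subset of size
at most `d+1` is affinely independent. -/
def InGeneralPosition (d : ℕ) (Y : Set (EuclideanSpace ℝ (Fin d))) : Prop :=
  ∀ s : Finset (EuclideanSpace ℝ (Fin d)), ↑s ⊆ Y → s.card ≤ d + 1 →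
    AffineIndependent ℝ (fun p : s => (p : EuclideanSpace ℝ (Fin d)))

/-!
Choose a point `O` such that every open half-plane bounded by a line through `O` contains at least a
third of the points (a centerpoint, by Helly's theorem), and perturb it so that no line through `O`
contains two of them. If `x₀, …, x₍₃ₙ₋₁₎` are the points in angular order around `O`, the triangles
`xᵢ xᵢ₊ₙ xᵢ₊₂ₙ` all contain `O` in their interior. Among all such packings take one minimizing
`∑ 2 ^ (number of points in the triangle)`. Two convex bodies with a common interior point and
disjoint frontiers are nested, so it is enough to exclude nested triangles. Given two nested
triangles, two of their six vertices are not separated by any line through `O` and another of the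
six; they belong to different triangles, and exchanging them keeps `O` inside both triangles. Both
new triangles lie in the old outer one and miss one of its vertices, which decreases the sum.
-/

namespace InGeneralPosition

variable {d : ℕ}

theorem mono {Y Z : Set (EuclideanSpace ℝ (Fin d))} (hZ : InGeneralPosition d Z) (hYZ : Y ⊆ Z) :
    InGeneralPosition d Y :=
  fun s hs ↦ hZ s (hs.trans hYZ)

theorem interior_convexHull_nonempty {X : Finset (EuclideanSpace ℝ (Fin d))}
    (hX : InGeneralPosition d X) (hcard : d + 1 ≤ X.card) :
    (interior (convexHull ℝ (X : Set (EuclideanSpace ℝ (Fin d))))).Nonempty := by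
  obtain ⟨s, hsX, hs⟩ := Finset.exists_subset_card_eq hcard
  have hind := hX s (Finset.coe_subset.2 hsX) hs.le
  have hspan := hind.affineSpan_eq_top_iff_card_eq_finrank_add_one.2 (by
    rw [Fintype.card_coe, hs, finrank_euclideanSpace_fin])
  rw [Subtype.range_coe_subtype, Finset.setOfPred_mem] at hspan
  exact (interior_convexHull_nonempty_iff_affineSpan_eq_top.2 hspan).mono
    (interior_mono (convexHull_mono (Finset.coe_subset.2 hsX)))

end InGeneralPosition

namespace CrossingTriangles

theorem sum_two_pow_lt_sum_two_pow {ι : Type*} [Fintype ι] {f g : ι → ℕ} {i j : ι}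
    (hij : i ≠ j) (hi : g i < f i) (hj : g j < f i) (hg : ∀ k, k ≠ i → k ≠ j → g k = f k) :
    ∑ k, 2 ^ g k < ∑ k, 2 ^ f k := by
  classical
  rw [← Finset.sum_add_sum_compl {i, j}, ← Finset.sum_add_sum_compl {i, j} fun k ↦ 2 ^ f k,
    Finset.sum_pair hij, Finset.sum_pair hij]
  have hrest : ∑ k ∈ {i, j}ᶜ, 2 ^ g k = ∑ k ∈ {i, j}ᶜ, 2 ^ f k := by
    refine Finset.sum_congr rfl fun k hk ↦ ?_
    simp only [Finset.mem_compl, Finset.mem_insert, Finset.mem_singleton, not_or] at hk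
    rw [hg k hk.1 hk.2]
  rw [hrest]
  refine Nat.add_lt_add_right ?_ _
  calc 2 ^ g i + 2 ^ g j ≤ 2 ^ (f i - 1) + 2 ^ (f i - 1) := by gcongr <;> omega
    _ = 2 ^ f i := by rw [← two_mul, mul_pow_sub_one (by omega)]
    _ < 2 ^ f i + 2 ^ f j := Nat.lt_add_of_pos_right (by positivity)

theorem exists_strictMono_comp_of_injOn {α β : Type*} [LinearOrder β] {s : Finset α} {f : α → β}
    (hf : Set.InjOn f s) {n : ℕ} (hs : s.card = n) :
    ∃ x : Fin n → α, StrictMono (f ∘ x) ∧ Set.range x = s := by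
  classical
  have hcard : (s.image f).card = n := by rw [Finset.card_image_of_injOn hf, hs]
  let θ := (s.image f).orderEmbOfFin hcard
  have hθ : Set.range θ = f '' s := by
    rw [Finset.range_orderEmbOfFin, Finset.coe_image]
  have hmem (i : Fin n) : ∃ a ∈ s, f a = θ i :=
    Finset.mem_image.1 (Finset.orderEmbOfFin_mem _ hcard i)
  choose x hxs hfx using hmem
  refine ⟨x, fun i j hij ↦ by simpa only [Function.comp_apply, hfx] using θ.strictMono hij, ?_⟩
  refine Set.Subset.antisymm (Set.range_subset_iff.2 hxs) fun a ha ↦ ?_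
  obtain ⟨i, hi⟩ : f a ∈ Set.range θ := hθ ▸ Set.mem_image_of_mem f ha
  exact ⟨i, hf (hxs i) ha ((hfx i).trans hi)⟩

theorem card_filter_comp_of_range_eq {α β : Type*} [Fintype α] {x : α → β} {s : Finset β}
    (hinj : Function.Injective x) (hrange : Set.range x = s) (p : β → Prop) [DecidablePred p] :
    (Finset.univ.filter fun k ↦ p (x k)).card = (s.filter p).card := by
  refine Finset.card_nbij x (fun k hk ↦ ?_) hinj.injOn fun q hq ↦ ?_
  · have hmem : x k ∈ s := Finset.mem_coe.1 (hrange ▸ Set.mem_range_self k)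
    exact Finset.mem_filter.2 ⟨hmem, (Finset.mem_filter.1 hk).2⟩
  · obtain ⟨hqs, hpq⟩ := Finset.mem_filter.1 hq
    obtain ⟨k, rfl⟩ : q ∈ Set.range x := hrange ▸ Finset.mem_coe.2 hqs
    exact ⟨k, Finset.mem_coe.2 (Finset.mem_filter.2 ⟨Finset.mem_univ k, hpq⟩), rfl⟩

section ConvexBodies

variable {E : Type*} [NormedAddCommGroup E] [NormedSpace ℝ E] {s t : Set E}

theorem subset_of_gauge_le (hs : IsClosed s) (hsc : Convex ℝ s) (hs₀ : s ∈ nhds 0)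
    (h : ∀ v, gauge s v ≤ gauge t v) : t ⊆ s := by
  intro v hv
  rw [← hs.closure_eq, ← gauge_le_one_iff_mem_closure hsc hs₀]
  exact (h v).trans (gauge_le_one_of_mem hv)

theorem frontier_inter_frontier_nonempty_of_gauge_eq (hsc : Convex ℝ s) (hs₀ : s ∈ nhds 0)
    (hsb : Bornology.IsBounded s) (htc : Convex ℝ t) (ht₀ : t ∈ nhds 0) {v : E} (hv : v ≠ 0)
    (h : gauge s v = gauge t v) : (frontier s ∩ frontier t).Nonempty := by
  have hpos : 0 < gauge s v :=
    (gauge_pos (absorbent_nhds_zero hs₀) ((NormedSpace.isVonNBounded_iff ℝ).2 hsb)).2 hv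
  refine ⟨(gauge s v)⁻¹ • v, ?_, ?_⟩
  · rw [← gauge_eq_one_iff_mem_frontier hsc hs₀, gauge_smul_of_nonneg (inv_nonneg.2 hpos.le),
      smul_eq_mul, inv_mul_cancel₀ hpos.ne']
  · rw [← gauge_eq_one_iff_mem_frontier htc ht₀, gauge_smul_of_nonneg (inv_nonneg.2 hpos.le), ← h,
      smul_eq_mul, inv_mul_cancel₀ hpos.ne']

theorem subset_or_subset_or_frontier_inter_nonempty_of_mem_nhds_zero (hE : 1 < Module.rank ℝ E)
    (hsc : Convex ℝ s) (hs : IsCompact s) (hs₀ : s ∈ nhds 0)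
    (htc : Convex ℝ t) (ht : IsClosed t) (ht₀ : t ∈ nhds 0) :
    s ⊆ t ∨ t ⊆ s ∨ (frontier s ∩ frontier t).Nonempty := by
  by_contra! ⟨hst, hts, hdisj⟩
  obtain ⟨v, hv⟩ : ∃ v, gauge s v < gauge t v := by
    contrapose! hst
    exact subset_of_gauge_le ht htc ht₀ hst
  obtain ⟨w, hw⟩ : ∃ w, gauge t w < gauge s w := by
    contrapose! hts
    exact subset_of_gauge_le hs.isClosed hsc hs₀ hts
  have hne {u : E} (hu : gauge s u ≠ gauge t u) : u ∈ ({0}ᶜ : Set E) := by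
    rintro rfl
    simp only [gauge_zero, ne_eq, not_true_eq_false] at hu
  obtain ⟨u, hu, hgauge⟩ :=
    (isConnected_compl_singleton_of_one_lt_rank hE 0).isPreconnected.intermediate_value₂
      (hne hv.ne) (hne hw.ne') (continuous_gauge hsc hs₀).continuousOn
      (continuous_gauge htc ht₀).continuousOn hv.le hw.le
  exact (frontier_inter_frontier_nonempty_of_gauge_eq hsc hs₀ hs.isBounded htc ht₀ hu
    hgauge).ne_empty hdisj

theorem subset_or_subset_or_frontier_inter_nonempty (hE : 1 < Module.rank ℝ E) {x : E}
    (hsc : Convex ℝ s) (hs : IsCompact s) (hxs : x ∈ interior s)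
    (htc : Convex ℝ t) (ht : IsClosed t) (hxt : x ∈ interior t) :
    s ⊆ t ∨ t ⊆ s ∨ (frontier s ∩ frontier t).Nonempty := by
  let φ := Homeomorph.addLeft x
  have hconv {u : Set E} (hu : Convex ℝ u) : Convex ℝ (φ ⁻¹' u) := hu.translate_preimage_right x
  have hnhds {u : Set E} (hu : x ∈ interior u) : φ ⁻¹' u ∈ nhds 0 := by
    refine φ.continuous.continuousAt.preimage_mem_nhds ?_
    simpa only [φ, Homeomorph.coe_addLeft, add_zero] using mem_interior_iff_mem_nhds.1 hu
  have h := subset_or_subset_or_frontier_inter_nonempty_of_mem_nhds_zero hE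
    (hconv hsc) (φ.isClosedEmbedding.isCompact_preimage hs) (hnhds hxs)
    (hconv htc) (ht.preimage φ.continuous) (hnhds hxt)
  rwa [← φ.preimage_frontier, ← φ.preimage_frontier, ← Set.preimage_inter,
    φ.surjective.nonempty_preimage, φ.surjective.preimage_subset_preimage_iff,
    φ.surjective.preimage_subset_preimage_iff] at h

end ConvexBodies

section Vertices

variable {E : Type*} [NormedAddCommGroup E] [NormedSpace ℝ E] {s u : Set E} {x : E}

theorem extremePoints_convexHull_of_affineIndependent (hs : s.Finite)
    (hind : AffineIndependent ℝ ((↑) : s → E)) : (convexHull ℝ s).extremePoints ℝ = s := by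
  refine extremePoints_convexHull_subset.antisymm fun x hx ↦ ?_
  by_contra hnot
  have hsub : (convexHull ℝ s).extremePoints ℝ ⊆ s \ {x} := fun y hy ↦
    ⟨extremePoints_convexHull_subset hy, fun hyx ↦ hnot (hyx ▸ hy)⟩
  have hmem : x ∈ convexHull ℝ (s \ {x}) := by
    have hclosed := (hs.subset (Set.sdiff_subset (t := {x}))).isClosed_convexHull ℝ
    refine closure_minimal (convexHull_mono hsub) hclosed ?_
    rw [closure_convexHull_extremePoints (hs.isCompact_convexHull ℝ) (convex_convexHull ℝ s)]
    exact subset_convexHull ℝ s hx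
  refine hind.notMem_affineSpan_sdiff ⟨x, hx⟩ Set.univ ?_
  rw [← Set.compl_eq_univ_sdiff, Set.image_val_compl, Set.image_singleton]
  exact convexHull_subset_affineSpan _ hmem

theorem notMem_convexHull_of_mem_extremePoints (hx : x ∈ s.extremePoints ℝ) (hs : Convex ℝ s)
    (hus : u ⊆ s) (hxu : x ∉ u) : x ∉ convexHull ℝ u := by
  rw [hs.mem_extremePoints_iff_mem_sdiff_convexHull_sdiff] at hx
  exact fun hmem ↦ hx.2 (convexHull_mono (Set.subset_sdiff_singleton hus hxu) hmem)

end Vertices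

section Centerpoint

variable {E : Type*} [NormedAddCommGroup E] [NormedSpace ℝ E]

/-- The region of points that stay in the interior of the convex hull of `X` whenever fewer than `N`
points of `X` are deleted. -/
def depthRegion (X : Finset E) (N : ℕ) : Set E :=
  ⋂ R ∈ X.powerset.filter (·.card < N), interior (convexHull ℝ (X \ R : Set E))

theorem mem_depthRegion_iff {X : Finset E} {N : ℕ} {x : E} : x ∈ depthRegion X N ↔
    ∀ R ⊆ X, R.card < N → x ∈ interior (convexHull ℝ (X \ R : Set E)) := by
  simp only [depthRegion, Set.mem_iInter, Finset.mem_filter, Finset.mem_powerset, and_imp]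

theorem isOpen_depthRegion (X : Finset E) (N : ℕ) : IsOpen (depthRegion X N) :=
  isOpen_biInter_finset fun _ _ ↦ isOpen_interior

theorem depthRegion_nonempty {d N : ℕ} {X : Finset (EuclideanSpace ℝ (Fin d))}
    (hX : InGeneralPosition d X) (hcard : (d + 1) * N ≤ X.card) : (depthRegion X N).Nonempty := by
  classical
  refine Convex.helly_theorem' (𝕜 := ℝ) (fun _ _ ↦ (convex_convexHull ℝ _).interior)
    fun I hI hIcard ↦ ?_
  rw [finrank_euclideanSpace_fin] at hIcard
  obtain rfl | ⟨R₀, hR₀⟩ := I.eq_empty_or_nonempty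
  · simp only [Finset.notMem_empty, Set.iInter_of_empty, Set.iInter_univ, Set.univ_nonempty]
  have hlt {R : Finset (EuclideanSpace ℝ (Fin d))} (hR : R ∈ I) : R.card < N :=
    (Finset.mem_filter.1 (hI hR)).2
  have hdeleted : (I.biUnion id).card ≤ (d + 1) * (N - 1) :=
    calc (I.biUnion id).card ≤ I.card * (N - 1) :=
          Finset.card_biUnion_le_card_mul _ _ _ fun R hR ↦ Nat.le_sub_one_of_lt (hlt hR)
      _ ≤ (d + 1) * (N - 1) := Nat.mul_le_mul_right _ hIcard
  have hremaining : d + 1 ≤ (X \ I.biUnion id).card := by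
    have hN : (d + 1) * N = (d + 1) * (N - 1) + (d + 1) := by
      rw [← Nat.mul_add_one, Nat.sub_add_cancel (Nat.one_le_of_lt (hlt hR₀))]
    have := Finset.le_card_sdiff (I.biUnion id) X
    omega
  have hpos := hX.mono (Finset.coe_subset.2 (Finset.sdiff_subset (t := I.biUnion id)))
  refine (hpos.interior_convexHull_nonempty hremaining).mono (Set.subset_iInter₂ fun R hR ↦ ?_)
  rw [Finset.coe_sdiff]
  gcongr
  exact Finset.subset_biUnion_of_mem id hR

end Centerpoint

/-- The Euclidean plane. -/
abbrev Plane := EuclideanSpace ℝ (Fin 2)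

/-- Twice the signed area of the triangle `abc`, positive when `a, b, c` are in counterclockwise
order. -/
def orient (a b c : Plane) : ℝ := (b 0 - a 0) * (c 1 - a 1) - (b 1 - a 1) * (c 0 - a 0)

theorem orient_self_right (a b : Plane) : orient a b b = 0 := by
  unfold orient; ring

theorem orient_self_left (a b : Plane) : orient a a b = 0 := by
  unfold orient; ring

theorem orient_swap (a b c : Plane) : orient a c b = -orient a b c := by
  unfold orient; ring

theorem orient_rotate (a b c : Plane) : orient b c a = orient a b c := by
  unfold orient; ring

@[fun_prop]
theorem continuous_orient (b c : Plane) : Continuous (orient · b c) := by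
  unfold orient; fun_prop

/-- The linear functional `w ↦ v × w`, the determinant of `v` and `w`. -/
noncomputable def cross (v : Plane) : Plane →L[ℝ] ℝ :=
  v 0 • EuclideanSpace.proj 1 - v 1 • EuclideanSpace.proj 0

theorem cross_apply (v w : Plane) : cross v w = v 0 * w 1 - v 1 * w 0 := rfl

theorem cross_ne_zero {v : Plane} (hv : v ≠ 0) : cross v ≠ 0 := by
  contrapose! hv
  have happly (w : Plane) : v 0 * w 1 - v 1 * w 0 = 0 := by rw [← cross_apply, hv]; rfl
  ext i
  fin_cases i
  · simpa using happly !₂[0, 1]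
  · simpa using happly !₂[1, 0]

theorem orient_eq_cross (a b c : Plane) : orient a b c = cross (b - a) (c - a) := rfl

theorem isOpenMap_orient {a b : Plane} (hab : a ≠ b) : IsOpenMap (orient a b) :=
  ((cross (b - a)).isOpenMap_of_ne_zero (cross_ne_zero (sub_ne_zero.2 hab.symm))).comp
    (Homeomorph.subRight a).isOpenMap

theorem dense_setOf_orient_ne_zero {b c : Plane} (hbc : b ≠ c) : Dense {a | orient a b c ≠ 0} := by
  have hpreimage : {a | orient a b c ≠ 0} = orient b c ⁻¹' {0}ᶜ :=
    Set.ext fun a ↦ not_congr (by rw [Set.mem_singleton_iff, orient_rotate a b c])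
  rw [hpreimage]
  exact (dense_compl_singleton 0).preimage (isOpenMap_orient hbc)

theorem convex_setOf_orient_nonpos (a b : Plane) : Convex ℝ {c | orient a b c ≤ 0} := by
  simp only [orient_eq_cross, map_sub, sub_nonpos]
  exact convex_halfSpace_le (cross (b - a)).isLinear _

theorem interior_setOf_orient_nonpos {a b : Plane} (hab : a ≠ b) :
    interior {c | orient a b c ≤ 0} = {c | orient a b c < 0} := by
  have hcont : Continuous (orient a b) := (cross (b - a)).continuous.comp (continuous_sub_right a)
  have h := (isOpenMap_orient hab).preimage_interior_eq_interior_preimage hcont (Set.Iic 0)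
  rw [interior_Iic] at h
  exact h.symm

theorem dense_setOf_pairwise_orient_ne_zero (X : Finset Plane) :
    Dense {O | (X : Set Plane).Pairwise (orient O · · ≠ 0)} := by
  have h : Dense (⋂ p ∈ (X : Set Plane).offDiag, {O : Plane | orient O p.1 p.2 ≠ 0}) := by
    refine dense_biInter_of_isOpen (fun p _ ↦ ?_) ?_ fun p hp ↦ ?_
    · exact isOpen_ne_fun (continuous_orient _ _) continuous_const
    · exact X.finite_toSet.offDiag.countable
    · exact dense_setOf_orient_ne_zero hp.2.2
  refine h.mono fun O hO p hp q hq hpq ↦ ?_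
  exact Set.mem_iInter₂.1 hO (p, q) ⟨hp, hq, hpq⟩

variable {O : Plane} {X : Finset Plane}

theorem ne_of_pairwise_orient_ne_zero (hX : (X : Set Plane).Pairwise (orient O · · ≠ 0))
    (hcard : 1 < X.card) {p : Plane} (hp : p ∈ X) : O ≠ p := by
  rintro rfl
  obtain ⟨q, hq, hqO⟩ := Finset.exists_mem_ne hcard O
  exact hX hp hq hqO.symm (orient_self_left O q)

theorem le_card_filter_orient_pos_of_mem_depthRegion {N : ℕ} (hO : O ∈ depthRegion X N)
    {p : Plane} (hp : O ≠ p) : N ≤ (X.filter (0 < orient O p ·)).card := by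
  by_contra! hlt
  have hmem := mem_depthRegion_iff.1 hO _ (Finset.filter_subset _ _) hlt
  have hsub : convexHull ℝ (X \ X.filter (0 < orient O p ·) : Set Plane) ⊆
      {q | orient O p q ≤ 0} := by
    refine convexHull_min (fun q hq ↦ ?_) (convex_setOf_orient_nonpos O p)
    exact not_lt.1 fun hpos ↦ hq.2 (Finset.mem_coe.2 (Finset.mem_filter.2 ⟨hq.1, hpos⟩))
  have hneg := interior_mono hsub hmem
  rw [interior_setOf_orient_nonpos hp, Set.mem_ofPred_eq, orient_swap, orient_self_left,
    neg_zero] at hneg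
  exact hneg.false

theorem exists_generic_centerpoint {N : ℕ} (hX : InGeneralPosition 2 (X : Set Plane))
    (hN : 3 * N ≤ X.card) : ∃ O, (X : Set Plane).Pairwise (orient O · · ≠ 0) ∧
      ∀ p ∈ X, N ≤ (X.filter (0 < orient O p ·)).card := by
  obtain ⟨O, hdeep, hgen⟩ := (dense_setOf_pairwise_orient_ne_zero X).inter_open_nonempty _
    (isOpen_depthRegion X N) (depthRegion_nonempty hX hN)
  refine ⟨O, hgen, fun p hp ↦ ?_⟩
  obtain rfl | hpos := N.eq_zero_or_pos
  · exact Nat.zero_le _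
  · exact le_card_filter_orient_pos_of_mem_depthRegion hdeep
      (ne_of_pairwise_orient_ne_zero hgen (by omega) hp)

/-- The finite set `T` is the vertex set of a triangle whose interior contains `O`, expressed by
listing the vertices counterclockwise around `O`. -/
def Encloses (O : Plane) (T : Finset Plane) : Prop :=
  ∃ a b c, T = {a, b, c} ∧ 0 < orient O a b ∧ 0 < orient O b c ∧ 0 < orient O c a

theorem ne_of_orient_pos {a b : Plane} (h : 0 < orient O a b) : a ≠ b := by
  rintro rfl
  exact h.ne' (orient_self_right O a)

theorem mem_convexHull_of_orient_pos {a b c : Plane} (hab : 0 < orient O a b)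
    (hbc : 0 < orient O b c) (hca : 0 < orient O c a) : O ∈ convexHull ℝ {a, b, c} := by
  have hsum : 0 < orient O b c + orient O c a + orient O a b := by positivity
  have hmem := Finset.centerMass_mem_convexHull (s := {a, b, c}) (t := Finset.univ)
    (w := ![orient O b c, orient O c a, orient O a b]) (z := ![a, b, c])
    (by simp [Fin.forall_fin_succ, hab.le, hbc.le, hca.le])
    (by simpa [Fin.sum_univ_three] using hsum) (by simp [Fin.forall_fin_succ])
  convert hmem
  rw [Finset.centerMass, eq_inv_smul_iff₀ (by simpa [Fin.sum_univ_three] using hsum.ne')]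
  ext i
  fin_cases i <;> simp [Fin.sum_univ_three, orient] <;> ring

/-- Two points `x` and `y` are twins in `E` around `O` if no line through `O` and a further point of
`E` separates them. -/
def Twins (O : Plane) (E : Finset Plane) (x y : Plane) : Prop :=
  ∀ z ∈ E, z ≠ x → z ≠ y → 0 < orient O x z * orient O y z

namespace Twins

variable {E F : Finset Plane} {x y z : Plane}

theorem symm (h : Twins O E x y) : Twins O E y x :=
  fun z hz hzy hzx ↦ mul_comm (orient O x z) _ ▸ h z hz hzx hzy

theorem mono (h : Twins O F x y) (hEF : E ⊆ F) : Twins O E x y :=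
  fun z hz ↦ h z (hEF hz)

theorem orient_pos_left (h : Twins O E x y) (hz : z ∈ E) (hzy : z ≠ y)
    (hpos : 0 < orient O x z) : 0 < orient O y z :=
  pos_of_mul_pos_right (h z hz (ne_of_orient_pos hpos).symm hzy) hpos.le

theorem orient_pos_right (h : Twins O E x y) (hz : z ∈ E) (hzy : z ≠ y)
    (hpos : 0 < orient O z x) : 0 < orient O z y := by
  have hprod := h z hz (ne_of_orient_pos hpos) hzy
  rw [orient_swap O z x, orient_swap O z y, neg_mul_neg] at hprod
  exact pos_of_mul_pos_right hprod hpos.le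

end Twins

namespace Encloses

variable {T : Finset Plane}

theorem mem_interior_convexHull (hT : Encloses O T) :
    O ∈ interior (convexHull ℝ (T : Set Plane)) := by
  obtain ⟨a, b, c, rfl, hab, hbc, hca⟩ := hT
  have hopen : IsOpen {x | 0 < orient x a b ∧ 0 < orient x b c ∧ 0 < orient x c a} := by
    apply_rules [IsOpen.and, isOpen_lt, continuous_const, continuous_orient]
  refine mem_interior.2 ⟨_, fun x hx ↦ ?_, hopen, ⟨hab, hbc, hca⟩⟩
  simpa only [Finset.coe_insert, Finset.coe_singleton] using
    mem_convexHull_of_orient_pos hx.1 hx.2.1 hx.2.2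

theorem card_eq_three (hT : Encloses O T) : T.card = 3 := by
  obtain ⟨a, b, c, rfl, hab, hbc, hca⟩ := hT
  exact Finset.card_eq_three.2
    ⟨a, b, c, ne_of_orient_pos hab, (ne_of_orient_pos hca).symm, ne_of_orient_pos hbc, rfl⟩

theorem exists_eq_insert (hT : Encloses O T) {x : Plane} (hx : x ∈ T) :
    ∃ b c, T = {x, b, c} ∧ 0 < orient O x b ∧ 0 < orient O b c ∧ 0 < orient O c x := by
  obtain ⟨a, b, c, rfl, hab, hbc, hca⟩ := hT
  simp only [Finset.mem_insert, Finset.mem_singleton] at hx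
  obtain rfl | rfl | rfl := hx
  · exact ⟨b, c, rfl, hab, hbc, hca⟩
  · exact ⟨c, a, by grind, hbc, hca, hab⟩
  · exact ⟨a, b, by grind, hca, hab, hbc⟩

theorem notMem_of_twins (hT : Encloses O T) {x y : Plane} (hx : x ∈ T) (hxy : x ≠ y)
    (htwins : Twins O T x y) : y ∉ T := by
  obtain ⟨b, c, rfl, hxb, hbc, hcx⟩ := hT.exists_eq_insert hx
  intro hy
  simp only [Finset.mem_insert, Finset.mem_singleton] at hy
  obtain rfl | rfl | rfl := hy
  · exact hxy rfl
  · have hcy := htwins.orient_pos_right (by simp) (ne_of_orient_pos hbc).symm hcx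
    rw [orient_swap] at hcy
    linarith
  · have hyb := htwins.orient_pos_left (by simp) (ne_of_orient_pos hbc) hxb
    rw [orient_swap] at hyb
    linarith

theorem map_swap (hT : Encloses O T) {x y : Plane} (hx : x ∈ T) (hy : y ∉ T)
    (htwins : Twins O T x y) : Encloses O (T.map (Equiv.swap x y).toEmbedding) := by
  obtain ⟨b, c, rfl, hxb, hbc, hcx⟩ := hT.exists_eq_insert hx
  simp only [Finset.mem_insert, Finset.mem_singleton, not_or] at hy
  obtain ⟨-, hyb, hyc⟩ := hy
  refine ⟨y, b, c, ?_, htwins.orient_pos_left (by simp) (Ne.symm hyb) hxb, hbc,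
    htwins.orient_pos_right (by simp) (Ne.symm hyc) hcx⟩
  rw [Finset.map_insert, Finset.map_insert, Finset.map_singleton, Equiv.toEmbedding_apply,
    Equiv.toEmbedding_apply, Equiv.toEmbedding_apply, Equiv.swap_apply_left,
    Equiv.swap_apply_of_ne_of_ne (ne_of_orient_pos hxb).symm (Ne.symm hyb),
    Equiv.swap_apply_of_ne_of_ne (ne_of_orient_pos hcx) (Ne.symm hyc)]

end Encloses

section Angles

/-- The polar angle of `p` as seen from `O`, in `(-π, π]`, and `0` for `p = O`. -/
noncomputable def angle (O p : Plane) : ℝ := Complex.arg ⟨p 0 - O 0, p 1 - O 1⟩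

theorem norm_mk_sub_eq_dist (O p : Plane) : ‖(⟨p 0 - O 0, p 1 - O 1⟩ : ℂ)‖ = dist O p := by
  rw [dist_comm, EuclideanSpace.dist_eq, Fin.sum_univ_two, Real.dist_eq, Real.dist_eq, sq_abs,
    sq_abs, Complex.norm_eq_sqrt_sq_add_sq]

theorem dist_mul_cos_angle (O p : Plane) : dist O p * Real.cos (angle O p) = p 0 - O 0 :=
  norm_mk_sub_eq_dist O p ▸ Complex.norm_mul_cos_arg _

theorem dist_mul_sin_angle (O p : Plane) : dist O p * Real.sin (angle O p) = p 1 - O 1 :=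
  norm_mk_sub_eq_dist O p ▸ Complex.norm_mul_sin_arg _

theorem orient_eq_dist_mul_dist_mul_sin (O p q : Plane) :
    orient O p q = dist O p * dist O q * Real.sin (angle O q - angle O p) := by
  rw [orient, ← dist_mul_cos_angle, ← dist_mul_cos_angle, ← dist_mul_sin_angle,
    ← dist_mul_sin_angle, Real.sin_sub]
  ring

theorem orient_pos_iff_sin_pos {p q : Plane} (hpq : orient O p q ≠ 0) :
    0 < orient O p q ↔ 0 < Real.sin (angle O q - angle O p) := by
  rw [orient_eq_dist_mul_dist_mul_sin] at hpq ⊢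
  have hdist : 0 ≤ dist O p * dist O q := by positivity
  exact mul_pos_iff_of_pos_left (hdist.lt_of_ne' (left_ne_zero_of_mul hpq))

-- Taking the radius signed lets the angle `φ p` describe the line through `O` and `p` only.
theorem exists_signed_polar (O : Plane) : ∃ ρ φ : Plane → ℝ, (∀ p, φ p ∈ Set.Ico 0 Real.pi) ∧
    ∀ p q, orient O p q = ρ p * ρ q * Real.sin (φ q - φ p) := by
  let k (p : Plane) : ℤ := toIcoDiv Real.pi_pos 0 (angle O p)
  refine ⟨fun p ↦ (-1) ^ k p * dist O p, fun p ↦ angle O p - k p * Real.pi, fun p ↦ ?_,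
    fun p q ↦ ?_⟩
  · simpa only [zsmul_eq_mul, zero_add] using sub_toIcoDiv_zsmul_mem_Ico Real.pi_pos 0 (angle O p)
  · have hdiff : angle O q - k q * Real.pi - (angle O p - k p * Real.pi) =
        angle O q - angle O p - (k q - k p : ℤ) * Real.pi := by
      push_cast
      ring
    have hsign : ((-1 : ℝ) ^ k p) * (-1) ^ k q * (-1) ^ (k q - k p) = 1 := by
      rw [mul_assoc, ← zpow_add₀ (by norm_num), ← zpow_add₀ (by norm_num)]
      exact Even.neg_one_zpow ⟨k q, by ring⟩
    rw [hdiff, Real.sin_sub_int_mul_pi, orient_eq_dist_mul_dist_mul_sin]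
    linear_combination -dist O p * dist O q * Real.sin (angle O q - angle O p) * hsign

end Angles

section Twins

theorem exists_mul_succ_pos_or_mul_last_neg {m : ℕ} (hm : Odd m) {a : Fin (m + 1) → ℝ}
    (ha : ∀ i, a i ≠ 0) :
    (∃ i : Fin m, 0 < a i.castSucc * a i.succ) ∨ a 0 * a (Fin.last m) < 0 := by
  rw [or_iff_not_imp_left]
  push Not
  intro hle
  have halt (i : Fin (m + 1)) : 0 < (-1) ^ (i : ℕ) * (a 0 * a i) := by
    induction i using Fin.induction with
    | zero => simpa using mul_self_pos.2 (ha 0)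
    | succ i ih =>
      have hneg : a i.castSucc * a i.succ < 0 :=
        (hle i).lt_of_ne (mul_ne_zero (ha _) (ha _))
      have hprod : 0 < a i.castSucc ^ 2 * ((-1) ^ (i.succ : ℕ) * (a 0 * a i.succ)) :=
        calc 0 < -((-1) ^ (i.castSucc : ℕ) * (a 0 * a i.castSucc) * (a i.castSucc * a i.succ)) :=
              neg_pos.2 (mul_neg_of_pos_of_neg ih hneg)
          _ = a i.castSucc ^ 2 * ((-1) ^ (i.succ : ℕ) * (a 0 * a i.succ)) := by
              rw [Fin.val_succ, Fin.val_castSucc, pow_succ]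
              ring
      exact pos_of_mul_pos_right hprod (sq_nonneg _)
  simpa [hm.neg_one_pow] using halt (Fin.last m)

theorem exists_signed_enumeration {E : Finset Plane}
    (hE : (E : Set Plane).Pairwise (orient O · · ≠ 0)) {n : ℕ} (hcard : E.card = n) :
    ∃ (x : Fin n → Plane) (ρ : Fin n → ℝ), Set.range x = E ∧
      ∀ i j, i < j → 0 < ρ i * ρ j * orient O (x i) (x j) := by
  obtain ⟨ρ, φ, hφ, horient⟩ := exists_signed_polar O
  have hinj : Set.InjOn φ E := by
    intro p hp q hq hpq
    by_contra hne
    exact hE hp hq hne (by rw [horient, hpq, sub_self, Real.sin_zero, mul_zero])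
  obtain ⟨x, hmono, hrange⟩ := exists_strictMono_comp_of_injOn hinj hcard
  have hmem (i : Fin n) : x i ∈ (E : Set Plane) := hrange ▸ Set.mem_range_self i
  refine ⟨x, ρ ∘ x, hrange, fun i j hij ↦ ?_⟩
  have hφij : φ (x i) < φ (x j) := hmono hij
  have hsin : 0 < Real.sin (φ (x j) - φ (x i)) :=
    Real.sin_pos_of_pos_of_lt_pi (sub_pos.2 hφij) (by linarith [(hφ (x i)).1, (hφ (x j)).2])
  have hne : orient O (x i) (x j) ≠ 0 := hE (hmem i) (hmem j) (hmono.injective.of_comp.ne hij.ne)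
  rw [horient] at hne ⊢
  rw [Function.comp_apply, Function.comp_apply, ← mul_assoc]
  exact mul_pos (mul_self_pos.2 (left_ne_zero_of_mul hne)) hsin

section SignedOrder

variable {n : ℕ} {x : Fin n → Plane} {ρ : Fin n → ℝ} {i j k : Fin n}

theorem orient_mul_orient_pos_of_outer
    (hx : ∀ i j, i < j → 0 < ρ i * ρ j * orient O (x i) (x j)) (hij : 0 < ρ i * ρ j)
    (hk : k < i ∧ k < j ∨ i < k ∧ j < k) : 0 < orient O (x i) (x k) * orient O (x j) (x k) := by
  have hprod : 0 < ρ i * ρ j * (ρ k ^ 2 * (orient O (x i) (x k) * orient O (x j) (x k))) := by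
    obtain ⟨hki, hkj⟩ | ⟨hik, hjk⟩ := hk
    · rw [orient_swap O (x k) (x i), orient_swap O (x k) (x j)]
      linear_combination mul_pos (hx k i hki) (hx k j hkj)
    · linear_combination mul_pos (hx i k hik) (hx j k hjk)
  exact pos_of_mul_pos_right (pos_of_mul_pos_right hprod hij.le) (sq_nonneg _)

theorem orient_mul_orient_pos_of_between
    (hx : ∀ i j, i < j → 0 < ρ i * ρ j * orient O (x i) (x j)) (hij : ρ i * ρ j < 0)
    (hik : i < k) (hkj : k < j) : 0 < orient O (x i) (x k) * orient O (x j) (x k) := by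
  have hprod : 0 < -(ρ i * ρ j) * (ρ k ^ 2 * (orient O (x i) (x k) * orient O (x j) (x k))) := by
    rw [orient_swap O (x k) (x j)]
    linear_combination mul_pos (hx i k hik) (hx k j hkj)
  exact pos_of_mul_pos_right (pos_of_mul_pos_right hprod (neg_pos.2 hij).le) (sq_nonneg _)

theorem ne_zero_of_ne (hx : ∀ i j, i < j → 0 < ρ i * ρ j * orient O (x i) (x j)) (hij : i ≠ j) :
    ρ i ≠ 0 := by
  obtain hlt | hlt := hij.lt_or_gt
  · exact left_ne_zero_of_mul (left_ne_zero_of_mul (hx i j hlt).ne')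
  · exact right_ne_zero_of_mul (left_ne_zero_of_mul (hx j i hlt).ne')

end SignedOrder

-- With the lines through `O` sorted by angle, neighbours on the same side are twins. If there are
-- none, the sides alternate, and as the number of points is even, the first and the last are twins.
theorem exists_twins {E : Finset Plane}
    (hE : (E : Set Plane).Pairwise (orient O · · ≠ 0)) (hne : E.Nonempty) (heven : Even E.card) :
    ∃ x ∈ E, ∃ y ∈ E, x ≠ y ∧ Twins O E x y := by
  obtain ⟨m, hm⟩ : ∃ m, E.card = m + 2 :=
    Nat.exists_eq_add_of_le' (Nat.one_lt_of_ne_zero_of_even hne.card_ne_zero heven)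
  have hodd : Odd (m + 1) := by rwa [hm, Nat.even_add_one, Nat.not_even_iff_odd] at heven
  obtain ⟨x, ρ, hrange, hx⟩ := exists_signed_enumeration hE hm
  have hmem (i : Fin (m + 2)) : x i ∈ E := Finset.mem_coe.1 (hrange ▸ Set.mem_range_self i)
  have hne {i j : Fin (m + 2)} (hij : i < j) : x i ≠ x j := by
    intro heq
    have hpos := hx i j hij
    rw [heq, orient_self_right, mul_zero] at hpos
    exact hpos.false
  have htwins {i j : Fin (m + 2)}
      (h : ∀ k, k ≠ i → k ≠ j → 0 < orient O (x i) (x k) * orient O (x j) (x k)) :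
      Twins O E (x i) (x j) := by
    intro z hz hzi hzj
    obtain ⟨k, rfl⟩ : z ∈ Set.range x := hrange ▸ Finset.mem_coe.2 hz
    exact h k (ne_of_apply_ne x hzi) (ne_of_apply_ne x hzj)
  have hρ (i : Fin (m + 2)) : ρ i ≠ 0 := (exists_ne i).elim fun j hji ↦ ne_zero_of_ne hx hji.symm
  obtain ⟨i, hi⟩ | hends := exists_mul_succ_pos_or_mul_last_neg hodd hρ
  · refine ⟨x i.castSucc, hmem _, x i.succ, hmem _, hne i.castSucc_lt_succ, htwins fun k hk hk' ↦
      orient_mul_orient_pos_of_outer hx hi ?_⟩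
    simp only [Fin.lt_def, Fin.val_castSucc, Fin.val_succ, ne_eq, Fin.ext_iff] at hk hk' ⊢
    omega
  · exact ⟨x 0, hmem _, x (Fin.last _), hmem _, hne Fin.last_pos, htwins fun k hk hk' ↦
      orient_mul_orient_pos_of_between hx hends (Fin.pos_of_ne_zero hk)
        (Fin.lt_last_iff_ne_last.2 hk')⟩

end Twins

section Birch

section SortedAngles

variable {n N : ℕ} {θ : Fin n → ℝ} {i j : Fin n}

theorem sin_sub_pos_of_card_filter_of_lt (hmono : Monotone θ)
    (hspread : ∀ i j, θ j - θ i < 2 * Real.pi)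
    (hcount : N ≤ (Finset.univ.filter fun k ↦ 0 < Real.sin (θ k - θ i)).card) (hθ : θ i < θ j)
    (hij : (j : ℕ) ≤ i + N) : 0 < Real.sin (θ j - θ i) := by
  suffices hlt : θ j - θ i < Real.pi from Real.sin_pos_of_pos_of_lt_pi (sub_pos.2 hθ) hlt
  by_contra! hle
  have hlt : i < j := hmono.reflect_lt hθ
  have hsub : (Finset.univ.filter fun k ↦ 0 < Real.sin (θ k - θ i)) ⊆ Finset.Ioo i j := by
    intro k hk
    contrapose! hk
    rw [Finset.mem_Ioo, not_and_or, not_lt, not_lt] at hk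
    simp only [Finset.mem_filter, Finset.mem_univ, true_and, not_lt]
    obtain hki | hjk := hk
    · refine Real.sin_nonpos_of_nonpos_of_neg_pi_le (sub_nonpos.2 (hmono hki)) ?_
      linarith [hspread k j]
    · rw [← Real.sin_sub_two_pi]
      apply Real.sin_nonpos_of_nonpos_of_neg_pi_le <;> linarith [hspread i k, hmono hjk]
  have hcard := hcount.trans (Finset.card_le_card hsub)
  rw [Fin.card_Ioo] at hcard
  omega

theorem sin_sub_pos_of_card_filter_of_gt (hmono : Monotone θ)
    (hspread : ∀ i j, θ j - θ i < 2 * Real.pi)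
    (hcount : N ≤ (Finset.univ.filter fun k ↦ 0 < Real.sin (θ k - θ j)).card) (hij : i ≤ j)
    (hn : n + i ≤ N + j) : 0 < Real.sin (θ i - θ j) := by
  suffices hlt : Real.pi < θ j - θ i by
    rw [← Real.sin_add_two_pi]
    apply Real.sin_pos_of_pos_of_lt_pi <;> linarith [hspread i j]
  by_contra! hle
  have hsub : (Finset.univ.filter fun k ↦ 0 < Real.sin (θ k - θ j)) ⊆ (Finset.Icc i j)ᶜ := by
    intro k hk
    contrapose! hk
    rw [Finset.notMem_compl, Finset.mem_Icc] at hk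
    simp only [Finset.mem_filter, Finset.mem_univ, true_and, not_lt]
    apply Real.sin_nonpos_of_nonpos_of_neg_pi_le <;> linarith [hmono hk.1, hmono hk.2]
  have hcard := hcount.trans (Finset.card_le_card hsub)
  rw [Finset.card_compl, Fin.card_Icc, Fintype.card_fin] at hcard
  omega

end SortedAngles

/-- A family of pairwise disjoint vertex sets of triangles with vertices in `X`, each containing `O`
in its interior. -/
structure IsTrianglePacking {ι : Type*} (X : Finset Plane) (O : Plane) (T : ι → Finset Plane) :
    Prop where
  subset : ∀ i, T i ⊆ X
  encloses : ∀ i, Encloses O (T i)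
  disjoint : Pairwise fun i j ↦ Disjoint (T i) (T j)

theorem exists_angular_enumeration {n : ℕ} (hX : (X : Set Plane).Pairwise (orient O · · ≠ 0))
    (hcard : X.card = n) :
    ∃ x : Fin n → Plane, StrictMono (angle O ∘ x) ∧ Set.range x = X := by
  refine exists_strictMono_comp_of_injOn (fun p hp q hq hpq ↦ ?_) hcard
  by_contra hne
  refine hX hp hq hne ?_
  rw [orient_eq_dist_mul_dist_mul_sin, hpq, sub_self, Real.sin_zero, mul_zero]

theorem angle_sub_angle_lt_two_pi (O p q : Plane) : angle O q - angle O p < 2 * Real.pi := by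
  have hp : -Real.pi < angle O p := Complex.neg_pi_lt_arg _
  have hq : angle O q ≤ Real.pi := Complex.arg_le_pi _
  linarith

theorem exists_enumeration_orient_pos {n N : ℕ} (hX : (X : Set Plane).Pairwise (orient O · · ≠ 0))
    (hcard : X.card = n) (hdepth : ∀ p ∈ X, N ≤ (X.filter (0 < orient O p ·)).card) :
    ∃ x : Fin n → Plane, Function.Injective x ∧ Set.range x = X ∧
      (∀ i j : Fin n, i < j → (j : ℕ) ≤ i + N → 0 < orient O (x i) (x j)) ∧
      ∀ i j : Fin n, i ≤ j → n + i ≤ N + j → 0 < orient O (x j) (x i) := by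
  obtain ⟨x, hmono, hrange⟩ := exists_angular_enumeration hX hcard
  have hinj : Function.Injective x := hmono.injective.of_comp
  have hmem (i : Fin n) : x i ∈ X := Finset.mem_coe.1 (hrange ▸ Set.mem_range_self i)
  have hsin (i j : Fin n) :
      0 < orient O (x i) (x j) ↔ 0 < Real.sin (angle O (x j) - angle O (x i)) := by
    obtain rfl | hij := eq_or_ne i j
    · rw [orient_self_right, sub_self, Real.sin_zero]
    · exact orient_pos_iff_sin_pos (hX (hmem i) (hmem j) (hinj.ne hij))
  have hcount (i : Fin n) :
      N ≤ (Finset.univ.filter fun k ↦ 0 < Real.sin (angle O (x k) - angle O (x i))).card := by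
    simp only [← hsin]
    rw [card_filter_comp_of_range_eq hinj hrange (0 < orient O (x i) ·)]
    exact hdepth _ (hmem i)
  have hspread (i j : Fin n) := angle_sub_angle_lt_two_pi O (x i) (x j)
  refine ⟨x, hinj, hrange, fun i j hlt hij ↦ (hsin i j).2 ?_, fun i j hij hN ↦ (hsin j i).2 ?_⟩
  · exact sin_sub_pos_of_card_filter_of_lt (θ := angle O ∘ x) hmono.monotone hspread (hcount i)
      (hmono hlt) hij
  · exact sin_sub_pos_of_card_filter_of_gt (θ := angle O ∘ x) hmono.monotone hspread (hcount j)
      hij hN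

theorem exists_isTrianglePacking {N : ℕ} (hX : (X : Set Plane).Pairwise (orient O · · ≠ 0))
    (hcard : X.card = 3 * N) (hdepth : ∀ p ∈ X, N ≤ (X.filter (0 < orient O p ·)).card) :
    ∃ T : Fin N → Finset Plane, IsTrianglePacking X O T := by
  obtain ⟨x, hinj, hrange, hnext, hwrap⟩ := exists_enumeration_orient_pos hX hcard hdepth
  have hmem (i : Fin (3 * N)) : x i ∈ X := Finset.mem_coe.1 (hrange ▸ Set.mem_range_self i)
  let y (i : Fin N) (k : Fin 3) : Plane := x (finProdFinEquiv (k, i))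
  refine ⟨fun i ↦ {y i 0, y i 1, y i 2}, fun i ↦ ?_, fun i ↦ ⟨_, _, _, rfl, ?_⟩, fun i j hij ↦ ?_⟩
  · simp only [Finset.insert_subset_iff, Finset.singleton_subset_iff]
    exact ⟨hmem _, hmem _, hmem _⟩
  · have := i.pos
    refine ⟨hnext _ _ ?_ ?_, hnext _ _ ?_ ?_, hwrap _ _ ?_ ?_⟩ <;>
      simp only [Fin.lt_def, Fin.le_def, finProdFinEquiv_apply_val, Fin.val_zero, Fin.val_one,
        Fin.val_two] <;> omega
  · have hne (k l : Fin 3) : y i k ≠ y j l := fun heq ↦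
      hij (Prod.ext_iff.1 (finProdFinEquiv.injective (hinj heq))).2
    simp only [Finset.disjoint_insert_left, Finset.disjoint_singleton_left, Finset.mem_insert,
      Finset.mem_singleton, hne, or_self, not_false_eq_true, and_self]

end Birch

/-- The number of points of `X` in the convex hull of `T`. -/
noncomputable def hullCount {E : Type*} [AddCommGroup E] [Module ℝ E] (X T : Finset E) : ℕ :=
  ((X : Set E) ∩ convexHull ℝ (T : Set E)).ncard

/-- The potential minimized by a packing of pairwise crossing triangles. The powers of two let the
largest hull outweigh any two smaller ones. -/
noncomputable def hullWeight {E ι : Type*} [AddCommGroup E] [Module ℝ E] [Fintype ι] (X : Finset E)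
    (T : ι → Finset E) : ℕ :=
  ∑ k, 2 ^ hullCount X (T k)

theorem hullCount_lt_hullCount {E : Type*} [NormedAddCommGroup E] [NormedSpace ℝ E]
    {X S T : Finset E} (hT : AffineIndependent ℝ ((↑) : T → E))
    (hST : (S : Set E) ⊆ convexHull ℝ T) {v : E} (hvX : v ∈ X) (hvT : v ∈ T) (hvS : v ∉ S) :
    hullCount X S < hullCount X T := by
  have hv : v ∈ (convexHull ℝ (T : Set E)).extremePoints ℝ := by
    rwa [extremePoints_convexHull_of_affineIndependent T.finite_toSet hT]
  have hvS' := notMem_convexHull_of_mem_extremePoints hv (convex_convexHull ℝ _) hST hvS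
  refine Set.ncard_lt_ncard ?_ (X.finite_toSet.inter_of_left _)
  refine (Set.ssubset_iff_of_subset ?_).2 ⟨v, ⟨hvX, hv.1⟩, fun h ↦ hvS' h.2⟩
  exact Set.inter_subset_inter_right _ (convexHull_min hST (convex_convexHull ℝ _))

theorem map_swap_eq_self {α : Type*} [DecidableEq α] {s : Finset α} {x y : α} (hx : x ∉ s)
    (hy : y ∉ s) : s.map (Equiv.swap x y).toEmbedding = s := by
  refine Finset.map_eq_of_subset fun z hz ↦ ?_
  obtain ⟨w, hw, rfl⟩ := Finset.mem_map.1 hz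
  rwa [Equiv.toEmbedding_apply, Equiv.swap_apply_of_ne_of_ne (ne_of_mem_of_not_mem hw hx)
    (ne_of_mem_of_not_mem hw hy)]

theorem coe_map_swap_subset {α : Type*} [DecidableEq α] {s : Finset α} {u : Set α} {x y : α}
    (hs : (s : Set α) ⊆ u) (hx : x ∈ u) (hy : y ∈ u) :
    (↑(s.map (Equiv.swap x y).toEmbedding) : Set α) ⊆ u := by
  intro z hz
  obtain ⟨w, hw, rfl⟩ := Finset.mem_map.1 (Finset.mem_coe.1 hz)
  rw [Equiv.toEmbedding_apply, Equiv.swap_apply_def]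
  split_ifs
  exacts [hy, hx, hs hw]

namespace IsTrianglePacking

variable {ι : Type*} {T : ι → Finset Plane} {i j : ι} {x y : Plane}

theorem notMem (hT : IsTrianglePacking X O T) (hij : i ≠ j) (hx : x ∈ T i) : x ∉ T j :=
  Finset.disjoint_left.1 (hT.disjoint hij) hx

theorem map_swap (hT : IsTrianglePacking X O T) (hij : i ≠ j) (hx : x ∈ T i) (hy : y ∈ T j)
    (htwins : Twins O (T i ∪ T j) x y) :
    IsTrianglePacking X O fun k ↦ (T k).map (Equiv.swap x y).toEmbedding := by
  refine ⟨fun k ↦ ?_, fun k ↦ ?_, fun k l hkl ↦ ?_⟩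
  · exact Finset.coe_subset.1 (coe_map_swap_subset (Finset.coe_subset.2 (hT.subset k))
      (hT.subset i hx) (hT.subset j hy))
  · obtain rfl | hki := eq_or_ne k i
    · exact (hT.encloses k).map_swap hx (hT.notMem hij.symm hy)
        (htwins.mono Finset.subset_union_left)
    obtain rfl | hkj := eq_or_ne k j
    · rw [Equiv.swap_comm]
      exact (hT.encloses k).map_swap hy (hT.notMem hij hx)
        (htwins.symm.mono Finset.subset_union_right)
    · rw [map_swap_eq_self (hT.notMem hki.symm hx) (hT.notMem hkj.symm hy)]
      exact hT.encloses k
  · exact (Finset.disjoint_map _).2 (hT.disjoint hkl)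

theorem exists_twins (hT : IsTrianglePacking X O T)
    (hX : (X : Set Plane).Pairwise (orient O · · ≠ 0)) (hij : i ≠ j) :
    ∃ x ∈ T i, ∃ y ∈ T j, Twins O (T i ∪ T j) x y := by
  have hcard : (T i ∪ T j).card = 6 := by
    rw [Finset.card_union_of_disjoint (hT.disjoint hij), (hT.encloses i).card_eq_three,
      (hT.encloses j).card_eq_three]
  have hsub : (↑(T i ∪ T j) : Set Plane) ⊆ X :=
    Finset.coe_subset.2 (Finset.union_subset (hT.subset i) (hT.subset j))
  obtain ⟨x, hx, y, hy, hxy, htwins⟩ := CrossingTriangles.exists_twins (hX.mono hsub)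
    (Finset.card_pos.1 (by omega)) (by rw [hcard]; decide)
  have hi (h : x ∈ T i) : y ∉ T i :=
    (hT.encloses i).notMem_of_twins h hxy (htwins.mono Finset.subset_union_left)
  have hj (h : x ∈ T j) : y ∉ T j :=
    (hT.encloses j).notMem_of_twins h hxy (htwins.mono Finset.subset_union_right)
  obtain hxi | hxj := Finset.mem_union.1 hx
  · exact ⟨x, hxi, y, (Finset.mem_union.1 hy).resolve_left (hi hxi), htwins⟩
  · exact ⟨y, (Finset.mem_union.1 hy).resolve_right (hj hxj), x, hxj, htwins.symm⟩

theorem exists_hullWeight_lt [Fintype ι] (hT : IsTrianglePacking X O T)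
    (hgp : InGeneralPosition 2 (X : Set Plane)) (hX : (X : Set Plane).Pairwise (orient O · · ≠ 0))
    (hij : i ≠ j) (hsub : convexHull ℝ (T j : Set Plane) ⊆ convexHull ℝ (T i)) :
    ∃ T' : ι → Finset Plane, IsTrianglePacking X O T' ∧ hullWeight X T' < hullWeight X T := by
  obtain ⟨x, hx, y, hy, htwins⟩ := hT.exists_twins hX hij
  obtain ⟨v, hv, hvx⟩ := Finset.exists_mem_ne
    (by rw [(hT.encloses i).card_eq_three]; decide : 1 < (T i).card) x
  have hind : AffineIndependent ℝ ((↑) : T i → Plane) :=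
    hgp _ (Finset.coe_subset.2 (hT.subset i)) (hT.encloses i).card_eq_three.le
  have hhull {k : ι} (hk : (T k : Set Plane) ⊆ convexHull ℝ (T i)) :
      (↑((T k).map (Equiv.swap x y).toEmbedding) : Set Plane) ⊆ convexHull ℝ (T i) :=
    coe_map_swap_subset hk (subset_convexHull ℝ _ hx) (hsub (subset_convexHull ℝ _ hy))
  refine ⟨_, hT.map_swap hij hx hy htwins, sum_two_pow_lt_sum_two_pow hij ?_ ?_ ?_⟩
  · refine hullCount_lt_hullCount hind (hhull (subset_convexHull ℝ _)) (hT.subset i hx) hx ?_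
    rw [Finset.mem_map_equiv, Equiv.symm_swap, Equiv.swap_apply_left]
    exact hT.notMem hij.symm hy
  · refine hullCount_lt_hullCount hind (hhull ((subset_convexHull ℝ _).trans hsub))
      (hT.subset i hv) hv ?_
    rw [Finset.mem_map_equiv, Equiv.symm_swap,
      Equiv.swap_apply_of_ne_of_ne hvx (ne_of_mem_of_not_mem hv (hT.notMem hij.symm hy))]
    exact hT.notMem hij hv
  · intro k hki hkj
    exact congrArg _ (map_swap_eq_self (hT.notMem hki.symm hx) (hT.notMem hkj.symm hy))

theorem frontier_inter_frontier_nonempty [Fintype ι]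
    (hT : MinimalFor (IsTrianglePacking X O) (hullWeight X) T)
    (hgp : InGeneralPosition 2 (X : Set Plane)) (hX : (X : Set Plane).Pairwise (orient O · · ≠ 0))
    (hij : i ≠ j) :
    (frontier (convexHull ℝ (T i : Set Plane)) ∩
      frontier (convexHull ℝ (T j : Set Plane))).Nonempty := by
  have hrank : 1 < Module.rank ℝ Plane := by
    rw [← Module.finrank_eq_rank, finrank_euclideanSpace_fin]
    norm_num
  have hnested {k l : ι} (hkl : k ≠ l) :
      ¬convexHull ℝ (T l : Set Plane) ⊆ convexHull ℝ (T k) := by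
    intro hsub
    obtain ⟨T', hT', hlt⟩ := hT.prop.exists_hullWeight_lt hgp hX hkl hsub
    exact hT.not_lt hT' hlt
  have hcompact (k : ι) := (T k).finite_toSet.isCompact_convexHull ℝ
  obtain hsub | hsub | hcross := subset_or_subset_or_frontier_inter_nonempty hrank
    (convex_convexHull ℝ _) (hcompact i) (hT.prop.encloses i).mem_interior_convexHull
    (convex_convexHull ℝ _) (hcompact j).isClosed (hT.prop.encloses j).mem_interior_convexHull
  · exact (hnested hij.symm hsub).elim
  · exact (hnested hij hsub).elim
  · exact hcross

end IsTrianglePacking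

end CrossingTriangles

open CrossingTriangles

/-- Every set of `n` points in general position in the plane spans `⌊n/3⌋`
vertex-disjoint triangles that are pairwise crossing, i.e. the topological
boundaries of their convex hulls pairwise intersect. -/
theorem pairwise_crossing_triangles (n : ℕ)
    (X : Finset (EuclideanSpace ℝ (Fin 2))) (hcard : X.card = n)
    (hgp : InGeneralPosition 2 (↑X : Set (EuclideanSpace ℝ (Fin 2)))) :
    ∃ T : Fin (n / 3) → Finset (EuclideanSpace ℝ (Fin 2)),
      (∀ i, T i ⊆ X) ∧
      (∀ i, (T i).card = 3) ∧
      (∀ i j, i ≠ j → Disjoint (T i) (T j)) ∧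
      (∀ i j, i ≠ j →
        (frontier (convexHull ℝ (↑(T i) : Set (EuclideanSpace ℝ (Fin 2)))) ∩
          frontier (convexHull ℝ (↑(T j) : Set (EuclideanSpace ℝ (Fin 2))))).Nonempty) := by
  subst hcard
  obtain ⟨Y, hYX, hY⟩ := Finset.exists_subset_card_eq (Nat.mul_div_le X.card 3)
  have hgpY : InGeneralPosition 2 (Y : Set Plane) := hgp.mono (Finset.coe_subset.2 hYX)
  obtain ⟨O, hgen, hdepth⟩ := exists_generic_centerpoint hgpY hY.ge
  obtain ⟨T, hT⟩ := exists_minimalFor_of_wellFoundedLT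
    (IsTrianglePacking Y O) (hullWeight Y) (exists_isTrianglePacking hgen hY hdepth)
  exact ⟨T, fun i ↦ (hT.prop.subset i).trans hYX, fun i ↦ (hT.prop.encloses i).card_eq_three,
    fun i j hij ↦ hT.prop.disjoint hij, fun i j hij ↦
      IsTrianglePacking.frontier_inter_frontier_nonempty hT hgpY hgen hij⟩
end

section
/- Let d ≥ 2. For every finite set X of n points in ℝ^d in general position, there exist ⌊n/(d+1)⌋ pairwise disjoint (d+1)-element subsets of X such that the simplices they span (their convex hulls) are pairwise crossing, i.e., for any two of these simplices the topological boundaries of their convex hulls have nonempty intersection. -/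
/-!
Write `d` for the dimension. By Tverberg's theorem (obtained from the colorful Carathéodory theorem
by Sarkaria's tensor trick) and by filling up the parts, there are `⌊n / (d + 1)⌋` disjoint
`(d + 1)`-subsets of `X` whose convex hulls share a point `p`. In dimension at least two, the
frontier of a simplex is connected, so two simplices sharing `p` cross unless one contains the
other.

Nested pairs are removed by a descent. If `conv A ⊆ conv B`, then `A ∪ B` has a partition into two
`(d + 1)`-sets, other than `{A, B}`, whose hulls contain `p`. For generic `p` this is a parity
argument: among any `d + 2` points, the number of simplices through `p` spanned by `d + 1` of them
is `0` or `2`. The general case follows by approximation, since general position makes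
`conv A ∩ conv B` the closure of its interior. Both new simplices lie in `conv B` and miss a vertex
of `B`, hence contain fewer points of `X` than `conv B`. Replacing `A` and `B` by the new pair
decreases the sum of `2 ^ #(X ∩ conv T)` over the simplices `T`, so a family minimizing this sum
for its common point `p` has no nested pair.
-/

section Faces

variable {E : Type*} [AddCommGroup E] [Module ℝ E]

theorem mem_convexHull_sep_eq_of_le {s : Set E} {f : E →ₗ[ℝ] ℝ} {p : E}
    (hs : ∀ x ∈ s, f x ≤ f p) (hp : p ∈ convexHull ℝ s) :
    p ∈ convexHull ℝ {x ∈ s | f x = f p} := by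
  obtain ⟨ι, _, w, z, hw, hw₁, hz, rfl⟩ := mem_convexHull_iff_exists_fintype.1 hp
  set p := ∑ i, w i • z i
  have hgap : ∑ i, w i * (f p - f (z i)) = 0 := by
    simp only [mul_sub, Finset.sum_sub_distrib, ← Finset.sum_mul, hw₁, p, map_sum, map_smul,
      smul_eq_mul, one_mul, sub_self]
  have hface : ∀ i, w i ≠ 0 → f (z i) = f p := fun i hi ↦ by
    have := (Finset.sum_eq_zero_iff_of_nonneg fun i _ ↦
      mul_nonneg (hw i) (sub_nonneg.2 (hs _ (hz i)))).1 hgap i (Finset.mem_univ i)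
    linarith [(mul_eq_zero.1 this).resolve_left hi]
  have hsupport : ∑ i with w i ≠ 0, w i = 1 := by rwa [Finset.sum_filter_ne_zero]
  have hsum : ∑ i with w i ≠ 0, w i • z i = p :=
    Finset.sum_filter_of_ne fun i _ hi hwi ↦ hi (by rw [hwi, zero_smul])
  have hmem : ∑ i with w i ≠ 0, w i • z i ∈ convexHull ℝ {x ∈ s | f x = f p} :=
    (convex_convexHull ℝ _).sum_mem (fun i _ ↦ hw i) hsupport fun i hi ↦
      subset_convexHull ℝ _ ⟨hz i, hface i (Finset.mem_filter.1 hi).2⟩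
  rwa [hsum] at hmem

variable [FiniteDimensional ℝ E]

theorem card_le_finrank_of_affineIndependent_of_apply_eq {t : Finset E}
    (ht : AffineIndependent ℝ ((↑) : t → E)) {f : E →ₗ[ℝ] ℝ} (hf : f ≠ 0) {u : ℝ}
    (hu : ∀ x ∈ t, f x = u) : t.card ≤ Module.finrank ℝ E := by
  by_contra! hlt
  have hcard : Fintype.card t = Module.finrank ℝ E + 1 :=
    le_antisymm ((ht.card_le_finrank_succ).trans (by gcongr; exact Submodule.finrank_le _))
      (by simpa using hlt)
  have hspan : affineSpan ℝ (t : Set E) = ⊤ := by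
    simpa using ht.affineSpan_eq_top_iff_card_eq_finrank_add_one.2 hcard
  have hconst : f.toAffineMap = AffineMap.const ℝ E u := AffineMap.ext_on hspan fun x hx ↦ hu x hx
  have hf' : ∀ x, f x = u := fun x ↦ congrArg (fun g : E →ᵃ[ℝ] ℝ ↦ g x) hconst
  exact hf (LinearMap.ext fun x ↦ by rw [hf' x, ← hf' 0, map_zero, LinearMap.zero_apply])

end Faces

section ColorfulCaratheodory

open Module

variable {ι : Type*} [Fintype ι]

theorem exists_mem_convexHull_image_compl_singleton {E : Type*} [AddCommGroup E] [Module ℝ E]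
    [FiniteDimensional ℝ E] {c : ι → E} {z : E} {f : E →ₗ[ℝ] ℝ} (hι : finrank ℝ E < Fintype.card ι)
    (hz : z ∈ convexHull ℝ (Set.range c)) (hf : f ≠ 0) (hfc : ∀ i, f (c i) ≤ f z) :
    ∃ j, z ∈ convexHull ℝ (c '' {j}ᶜ) := by
  classical
  have hface := mem_convexHull_sep_eq_of_le (Set.forall_mem_range.2 hfc) hz
  rw [convexHull_eq_union] at hface
  simp only [Set.mem_iUnion] at hface
  obtain ⟨t, htc, ht, hzt⟩ := hface
  have hι₀ : Nonempty ι := Fintype.card_pos_iff.1 (Nat.zero_lt_of_lt hι)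
  have hpreimage : ∀ x ∈ t, ∃ i, c i = x := fun x hx ↦ (htc hx).1
  choose! g hg using hpreimage
  have htcard : t.card ≤ finrank ℝ E :=
    card_le_finrank_of_affineIndependent_of_apply_eq ht hf fun x hx ↦ (htc hx).2
  have hcard : (t.image g).card < Fintype.card ι :=
    (Finset.card_image_le.trans htcard).trans_lt hι
  obtain ⟨j, hj⟩ : ∃ j, j ∉ t.image g := by
    by_contra! hall
    exact hcard.ne (by rw [Finset.eq_univ_of_forall hall, Finset.card_univ])
  have htj : (t : Set E) ⊆ c '' {j}ᶜ := fun x hx ↦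
    ⟨g x, fun hgx ↦ hj (hgx ▸ Finset.mem_image_of_mem g hx), hg x hx⟩
  exact ⟨j, convexHull_mono htj hzt⟩

variable {F : Type*} [NormedAddCommGroup F] [InnerProductSpace ℝ F]

theorem exists_dist_lt_of_inner_pos {K : Set F} (hK : Convex ℝ K) {p y z : F} (hz : z ∈ K)
    (hy : y ∈ K) (hpos : 0 < inner ℝ (p - z) (y - z)) : ∃ z' ∈ K, dist p z' < dist p z := by
  by_contra! hmin
  have : Nonempty K := ⟨⟨z, hz⟩⟩
  refine hpos.not_ge ((norm_eq_iInf_iff_real_inner_le_zero hK hz).1 ?_ y hy)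
  have hbdd : BddBelow (Set.range fun w : K ↦ ‖p - w‖) := ⟨0, by rintro - ⟨w, rfl⟩; positivity⟩
  refine le_antisymm (le_ciInf fun w ↦ ?_) (ciInf_le hbdd ⟨z, hz⟩)
  simpa only [dist_eq_norm] using hmin w w.2

variable [FiniteDimensional ℝ F]

theorem exists_rainbow_dist_lt {C : ι → Set F} {p z : F} {c : ι → F}
    (hι : finrank ℝ F < Fintype.card ι) (hC : ∀ i, p ∈ convexHull ℝ (C i)) (hc : ∀ i, c i ∈ C i)
    (hz : z ∈ convexHull ℝ (Set.range c)) (hzp : z ≠ p) :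
    ∃ c' : ι → F, (∀ i, c' i ∈ C i) ∧
      ∃ z' ∈ convexHull ℝ (Set.range c'), dist p z' < dist p z := by
  classical
  by_cases hnear : ∃ w ∈ convexHull ℝ (Set.range c), 0 < inner ℝ (p - z) (w - z)
  · obtain ⟨w, hw, hpos⟩ := hnear
    exact ⟨c, hc, exists_dist_lt_of_inner_pos (convex_convexHull ℝ _) hz hw hpos⟩
  push Not at hnear
  have hpz : 0 < inner ℝ (p - z) (p - z) := real_inner_self_pos.2 (sub_ne_zero.2 hzp.symm)
  let f : F →ₗ[ℝ] ℝ := innerₗ F (p - z)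
  have hf : f ≠ 0 := fun h ↦ hpz.ne' (congrArg (fun g : F →ₗ[ℝ] ℝ ↦ g (p - z)) h)
  have hfc : ∀ i, f (c i) ≤ f z := fun i ↦ by
    rw [← sub_nonpos, ← map_sub]
    exact hnear _ (subset_convexHull ℝ _ ⟨i, rfl⟩)
  obtain ⟨j, hzj⟩ := exists_mem_convexHull_image_compl_singleton hι hz hf hfc
  obtain ⟨y, hyC, hpy⟩ := (f.convexOn convex_univ).exists_ge_of_mem_convexHull
    (Set.subset_univ _) (hC j)
  have hzy : 0 < inner ℝ (p - z) (y - z) := by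
    refine hpz.trans_le ?_
    change f (p - z) ≤ f (y - z)
    rw [map_sub, map_sub]
    gcongr
  have hsub : c '' {j}ᶜ ⊆ Set.range (Function.update c j y) := by
    rintro - ⟨i, hi, rfl⟩
    exact ⟨i, Function.update_of_ne hi _ _⟩
  refine ⟨Function.update c j y, fun i ↦ ?_, exists_dist_lt_of_inner_pos
    (convex_convexHull ℝ _) (convexHull_mono hsub hzj)
    (subset_convexHull ℝ _ ⟨j, Function.update_self _ _ _⟩) hzy⟩
  rcases eq_or_ne i j with rfl | hij
  · rwa [Function.update_self]
  · rw [Function.update_of_ne hij]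
    exact hc i

theorem colorful_caratheodory_of_innerProductSpace {C : ι → Set F} {p : F}
    (hι : finrank ℝ F < Fintype.card ι) (hC : ∀ i, p ∈ convexHull ℝ (C i)) :
    ∃ c : ι → F, (∀ i, c i ∈ C i) ∧ p ∈ convexHull ℝ (Set.range c) := by
  have hfin : ∀ i, ∃ t : Finset F, ↑t ⊆ C i ∧ p ∈ convexHull ℝ (t : Set F) := fun i ↦ by
    simpa only [Set.mem_iUnion, exists_prop] using
      (convexHull_eq_union_convexHull_finite_subsets (R := ℝ) (C i)).subset (hC i)
  choose t htC hpt using hfin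
  choose c₀ hc₀ using fun i ↦ convexHull_nonempty_iff.1 ⟨p, hpt i⟩
  obtain ⟨i₀⟩ : Nonempty ι := Fintype.card_pos_iff.1 (Nat.zero_lt_of_lt hι)
  let K : Set F := ⋃ c ∈ {c : ι → F | ∀ i, c i ∈ (t i : Set F)}, convexHull ℝ (Set.range c)
  have hK : IsCompact K := (Set.Finite.pi' fun i ↦ (t i).finite_toSet).isCompact_biUnion
    fun c _ ↦ (Set.finite_range c).isCompact_convexHull ℝ
  have hKne : K.Nonempty :=
    ⟨c₀ i₀, Set.mem_biUnion hc₀ (subset_convexHull ℝ _ (Set.mem_range_self i₀))⟩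
  obtain ⟨z, hzK, hzmin⟩ := hK.exists_isMinOn hKne (f := dist p) (by fun_prop)
  obtain ⟨c, hc, hzc⟩ := Set.mem_iUnion₂.1 hzK
  rcases eq_or_ne z p with rfl | hzp
  · exact ⟨c, fun i ↦ htC i (hc i), hzc⟩
  · obtain ⟨c', hc', z', hz', hlt⟩ := exists_rainbow_dist_lt hι hpt hc hzc hzp
    exact absurd hlt (hzmin (Set.mem_biUnion hc' hz')).not_gt

theorem colorful_caratheodory {E : Type*} [AddCommGroup E] [Module ℝ E] [FiniteDimensional ℝ E]
    {C : ι → Set E} {p : E} (hι : finrank ℝ E < Fintype.card ι)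
    (hC : ∀ i, p ∈ convexHull ℝ (C i)) :
    ∃ c : ι → E, (∀ i, c i ∈ C i) ∧ p ∈ convexHull ℝ (Set.range c) := by
  let e : E ≃ₗ[ℝ] EuclideanSpace ℝ (Fin (finrank ℝ E)) :=
    LinearEquiv.ofFinrankEq _ _ finrank_euclideanSpace_fin.symm
  have hC' : ∀ i, e p ∈ convexHull ℝ (e '' C i) := fun i ↦ by
    rw [← e.coe_coe, ← LinearMap.image_convexHull]
    exact Set.mem_image_of_mem _ (hC i)
  obtain ⟨c, hc, hp⟩ := colorful_caratheodory_of_innerProductSpace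
    (by rwa [finrank_euclideanSpace_fin]) hC'
  choose b hbC hbc using hc
  refine ⟨b, hbC, ?_⟩
  obtain rfl : c = e ∘ b := funext fun i ↦ (hbc i).symm
  rw [Set.range_comp, ← e.coe_coe, ← LinearMap.image_convexHull] at hp
  exact e.injective.mem_set_image.1 hp

end ColorfulCaratheodory

section Tverberg

open Module

theorem exists_weights_of_mem_convexHull_range {ι E : Type*} [Fintype ι] [AddCommGroup E]
    [Module ℝ E] {v : ι → E} {p : E} (hp : p ∈ convexHull ℝ (Set.range v)) :
    ∃ w : ι → ℝ, (∀ i, 0 ≤ w i) ∧ ∑ i, w i = 1 ∧ ∑ i, w i • v i = p := by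
  classical
  rw [convexHull_range_eq_exists_affineCombination] at hp
  obtain ⟨s, w, hw, hw₁, rfl⟩ := hp
  refine ⟨fun i ↦ if i ∈ s then w i else 0, fun i ↦ ?_, ?_, ?_⟩
  · dsimp only
    split_ifs with hi
    exacts [hw i hi, le_rfl]
  · simpa using hw₁
  · simp [s.affineCombination_eq_linear_combination v w hw₁, ite_smul]

theorem zero_mem_convexHull_range_of_sum_eq_zero {ι E : Type*} [Fintype ι] [Nonempty ι]
    [AddCommGroup E] [Module ℝ E] {v : ι → E} (hv : ∑ i, v i = 0) :
    0 ∈ convexHull ℝ (Set.range v) := by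
  have hmem : Finset.univ.centerMass (fun _ ↦ (1 : ℝ)) v ∈ convexHull ℝ (Set.range v) :=
    Finset.centerMass_mem_convexHull _ (fun _ _ ↦ zero_le_one) (by simp [Fintype.card_pos])
      (by simp)
  simpa [Finset.centerMass, hv] using hmem

variable {ι κ : Type*} [Fintype ι] [Fintype κ]

theorem exists_weights_sum_fiber_eq [DecidableEq κ] {V : Type*} [AddCommGroup V] [Module ℝ V]
    [FiniteDimensional ℝ V] (hι : Fintype.card κ * finrank ℝ V < Fintype.card ι) (u : ι → V) :
    ∃ (f : ι → Option κ) (l : ι → ℝ), (∀ i, 0 ≤ l i) ∧ ∑ i, l i = 1 ∧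
      ∀ a, ∑ i with f i = a, l i • u i = ∑ i with f i = none, l i • u i := by
  -- Sarkaria's trick: colorful Carathéodory in `V ^ κ`, applied to the simplices `C i` around `0`.
  let C : ι → Option κ → κ → V := fun i a ↦ a.elim (fun _ ↦ -u i) fun b ↦ Pi.single b (u i)
  have hC : ∀ i, 0 ∈ convexHull ℝ (Set.range (C i)) := fun i ↦
    zero_mem_convexHull_range_of_sum_eq_zero <| by
      ext b
      simp [C, Fintype.sum_option]
  obtain ⟨c, hc, h0⟩ := colorful_caratheodory (by simpa [finrank_pi_fintype] using hι) hC
  choose f hf using hc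
  obtain ⟨l, hl, hl₁, hl₀⟩ := exists_weights_of_mem_convexHull_range h0
  refine ⟨f, l, hl, hl₁, Option.rec rfl fun b ↦ ?_⟩
  have hcoord : ∀ i, l i • c i b =
      (if f i = some b then l i • u i else 0) - if f i = none then l i • u i else 0 := fun i ↦ by
    rw [← hf i]
    rcases f i with _ | a <;> simp [C, Pi.single_apply, eq_comm]
  have hb := congrFun hl₀ b
  simp only [Finset.sum_apply, Pi.smul_apply, hcoord, Finset.sum_sub_distrib] at hb
  rw [Finset.sum_filter, Finset.sum_filter, ← sub_eq_zero]
  exact hb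

variable {E : Type*} [AddCommGroup E] [Module ℝ E] [FiniteDimensional ℝ E]

theorem exists_tverberg_coloring (hι : Fintype.card κ * (finrank ℝ E + 1) < Fintype.card ι)
    (x : ι → E) :
    ∃ (f : ι → Option κ) (p : E), ∀ a, p ∈ convexHull ℝ (x '' {i | f i = a}) := by
  classical
  obtain ⟨f, l, hl, hl₁, hfiber⟩ := exists_weights_sum_fiber_eq (κ := κ) (by simpa using hι)
    fun i ↦ ((x i, 1) : E × ℝ)
  set m := ∑ i with f i = none, l i
  have hmass : ∀ a, ∑ i with f i = a, l i = m := fun a ↦ by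
    simpa [m, Prod.snd_sum] using congrArg Prod.snd (hfiber a)
  have hmoment : ∀ a, ∑ i with f i = a, l i • x i = ∑ i with f i = none, l i • x i := fun a ↦ by
    simpa [Prod.fst_sum] using congrArg Prod.fst (hfiber a)
  have hm : (Fintype.card κ + 1) * m = 1 := by
    simpa [hmass, hl₁] using Finset.sum_fiberwise Finset.univ f l
  have hmpos : 0 < m := pos_of_mul_pos_right (hm ▸ one_pos) (by positivity)
  refine ⟨f, m⁻¹ • ∑ i with f i = none, l i • x i, fun a ↦ ?_⟩
  have hmem : (Finset.univ.filter (f · = a)).centerMass l x ∈ convexHull ℝ (x '' {i | f i = a}) :=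
    Finset.centerMass_mem_convexHull _ (fun i _ ↦ hl i) (by rwa [hmass a]) fun i hi ↦
      ⟨i, (Finset.mem_filter.1 hi).2, rfl⟩
  rwa [Finset.centerMass, hmass a, hmoment a] at hmem

end Tverberg

section FillingUp

open Finset
open scoped Function

variable {α κ : Type*}

theorem pairwise_disjoint_update_insert [DecidableEq α] [DecidableEq κ] {T : κ → Finset α}
    (hT : Pairwise (Disjoint on T)) {y : α} (hy : ∀ i, y ∉ T i) (i : κ) :
    Pairwise (Disjoint on Function.update T i (insert y (T i))) := by
  intro j k hjk
  have := hT hjk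
  simp only [Function.onFun, Function.update_apply]
  grind

theorem exists_notMem_of_card_lt [Fintype κ] {T : κ → Finset α} {X : Finset α} {m : ℕ}
    (hX : Fintype.card κ * m ≤ #X) (hm : ∀ i, #(T i) ≤ m) {i : κ} (hi : #(T i) < m) :
    ∃ y ∈ X, ∀ j, y ∉ T j := by
  classical
  have hcard : #(univ.biUnion T) < #X := calc
    #(univ.biUnion T) ≤ ∑ j, #(T j) := card_biUnion_le
    _ < ∑ _j : κ, m := sum_lt_sum (fun j _ ↦ hm j) ⟨i, mem_univ i, hi⟩
    _ = Fintype.card κ * m := by rw [sum_const, card_univ, smul_eq_mul]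
    _ ≤ #X := hX
  obtain ⟨y, hyX, hy⟩ := exists_mem_notMem_of_card_lt_card hcard
  exact ⟨y, hyX, fun j hj ↦ hy (mem_biUnion.2 ⟨j, mem_univ j, hj⟩)⟩

theorem exists_superset_pairwise_disjoint_card_eq [Fintype κ] {T₀ : κ → Finset α} {X : Finset α}
    {m : ℕ} (hX : Fintype.card κ * m ≤ #X) (hsub : ∀ i, T₀ i ⊆ X) (hcard : ∀ i, #(T₀ i) ≤ m)
    (hdisj : Pairwise (Disjoint on T₀)) :
    ∃ T : κ → Finset α, (∀ i, T₀ i ⊆ T i) ∧ (∀ i, T i ⊆ X) ∧ (∀ i, #(T i) = m) ∧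
      Pairwise (Disjoint on T) := by
  classical
  let S : Set (κ → Finset α) :=
    {T | (∀ i, T i ⊆ X) ∧ (∀ i, #(T i) ≤ m) ∧ Pairwise (Disjoint on T)}
  have hfin : S.Finite := (Set.finite_Iic fun _ ↦ X).subset fun T hT ↦ hT.1
  obtain ⟨T, hT₀T, ⟨hTX, hTm, hTd⟩, hmax⟩ :=
    hfin.exists_le_maximal (show T₀ ∈ S from ⟨hsub, hcard, hdisj⟩)
  refine ⟨T, hT₀T, hTX, fun i ↦ (hTm i).eq_of_not_lt fun hlt ↦ ?_, hTd⟩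
  obtain ⟨y, hyX, hy⟩ := exists_notMem_of_card_lt hX hTm hlt
  have hmem : Function.update T i (insert y (T i)) ∈ S := by
    refine ⟨fun j ↦ ?_, fun j ↦ ?_, pairwise_disjoint_update_insert hTd hy i⟩ <;>
      rw [Function.update_apply] <;> grind
  have hle : T ≤ Function.update T i (insert y (T i)) :=
    le_update_self_iff.2 (subset_insert _ _)
  refine hy i (hmax hmem hle i ?_)
  rw [Function.update_self]
  exact mem_insert_self _ _

end FillingUp

section TverbergFamily

open Finset Module
open scoped Function

variable {E κ : Type*} [AddCommGroup E] [Module ℝ E]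

/-- A family of pairwise disjoint subsets of `X`, each with `dim E + 1` elements, whose convex
hulls all contain the point `p`. -/
structure IsTverbergFamily (X : Finset E) (p : E) (T : κ → Finset E) : Prop where
  subset : ∀ i, T i ⊆ X
  card_eq : ∀ i, #(T i) = finrank ℝ E + 1
  pairwise_disjoint : Pairwise (Disjoint on T)
  mem_convexHull : ∀ i, p ∈ convexHull ℝ (T i : Set E)

variable [FiniteDimensional ℝ E]

theorem exists_finset_card_le_of_mem_convexHull {s : Set E} {p : E} (hp : p ∈ convexHull ℝ s) :
    ∃ t : Finset E, ↑t ⊆ s ∧ #t ≤ finrank ℝ E + 1 ∧ p ∈ convexHull ℝ (t : Set E) := by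
  rw [convexHull_eq_union] at hp
  simp only [Set.mem_iUnion] at hp
  obtain ⟨t, hts, ht, hpt⟩ := hp
  refine ⟨t, hts, ?_, hpt⟩
  simpa using ht.card_le_finrank_succ.trans (Nat.succ_le_succ (Submodule.finrank_le _))

theorem exists_isTverbergFamily [Fintype κ] [Nonempty κ] {X : Finset E}
    (hX : Fintype.card κ * (finrank ℝ E + 1) ≤ #X) :
    ∃ (p : E) (T : κ → Finset E), IsTverbergFamily X p T := by
  classical
  obtain ⟨a₀⟩ := ‹Nonempty κ›
  let e : Option {a // a ≠ a₀} ≃ κ := Equiv.optionSubtypeNe a₀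
  have hκ : Fintype.card {a // a ≠ a₀} + 1 = Fintype.card κ := by
    rw [← Fintype.card_congr e, Fintype.card_option]
  have hX' : Fintype.card {a // a ≠ a₀} * (finrank ℝ E + 1) < Fintype.card X := by
    rw [Fintype.card_coe]
    refine lt_of_lt_of_le ?_ hX
    gcongr
    omega
  obtain ⟨f, p, hp⟩ := exists_tverberg_coloring hX' ((↑) : X → E)
  choose t ht htcard hpt using fun a ↦ exists_finset_card_le_of_mem_convexHull (hp a)
  have htX : ∀ a, t a ⊆ X := fun a x hx ↦ by
    obtain ⟨y, -, rfl⟩ := ht a hx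
    exact y.2
  have htd : Pairwise (Disjoint on t ∘ e.symm) := fun a b hab ↦
    disjoint_left.2 fun x hxa hxb ↦ by
      obtain ⟨y, hya, rfl⟩ := ht _ hxa
      obtain ⟨z, hzb, hzy⟩ := ht _ hxb
      obtain rfl := Subtype.ext hzy
      exact hab (e.symm.injective (hya.symm.trans hzb))
  obtain ⟨T, htT, hTX, hTcard, hTd⟩ := exists_superset_pairwise_disjoint_card_eq hX
    (fun a ↦ htX (e.symm a)) (fun a ↦ htcard (e.symm a)) htd
  exact ⟨p, T, hTX, hTcard, hTd, fun a ↦ convexHull_mono (htT a) (hpt (e.symm a))⟩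

end TverbergFamily

section Parity

open Finset

variable {α : Type*} [DecidableEq α] {P : Finset α → Prop} [DecidablePred P] {Z A : Finset α}
  {v : α} {m : ℕ}

theorem card_insert_sdiff_eq_add_one (hZ : #Z = 2 * m) (hA : A ∈ Z.powersetCard m) (hv : v ∈ A) :
    #(insert v (Z \ A)) = m + 1 := by
  obtain ⟨hAZ, hAm⟩ := mem_powersetCard.1 hA
  rw [card_insert_of_notMem (by simp [hv]), card_sdiff_of_subset hAZ]
  omega

theorem card_filter_inter_eq_singleton (hZ : #Z = 2 * m) (hA : A ∈ Z.powersetCard m) (hv : v ∈ A) :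
    #{S ∈ Z.powersetCard m | (v ∈ S ∧ P S) ∧ A ∩ S = {v}} =
      #{w ∈ Z \ A | P ((insert v (Z \ A)).erase w)} := by
  have hAZ := (mem_powersetCard.1 hA).1
  have hW := card_insert_sdiff_eq_add_one hZ hA hv
  refine (card_bij (fun w _ ↦ (insert v (Z \ A)).erase w) (fun w hw ↦ ?_) (fun w hw x hx h ↦ ?_)
    fun S hS ↦ ?_).symm
  · obtain ⟨hwA, hPw⟩ := mem_filter.1 hw
    have hcard : #((insert v (Z \ A)).erase w) = m := by
      rw [card_erase_of_mem (mem_insert_of_mem hwA), hW, Nat.add_sub_cancel]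
    grind
  · exact erase_injOn _ (by grind) (by grind) h
  · simp only [mem_filter, mem_powersetCard] at hS
    have hAS : ∀ x ∈ A, x ∈ S → x = v := fun x hxA hxS ↦
      mem_singleton.1 (hS.2.2 ▸ mem_inter.2 ⟨hxA, hxS⟩)
    have hSW : S ⊆ insert v (Z \ A) := by grind
    obtain ⟨w, hwS, hw⟩ := exists_eq_insert_iff.2 ⟨hSW, by rw [hS.1.2, hW]⟩
    have hSw : (insert v (Z \ A)).erase w = S := by rw [← hw, erase_insert hwS]
    exact ⟨w, by grind, hSw⟩

theorem odd_card_filter_erase_iff (hv : v ∉ A)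
    (hA : Even #{w ∈ insert v A | P ((insert v A).erase w)}) :
    Odd #{w ∈ A | P ((insert v A).erase w)} ↔ P A := by
  rw [filter_insert, erase_insert hv] at hA
  by_cases hPA : P A
  · rw [if_pos hPA, card_insert_of_notMem (by simp [hv]), Nat.even_add_one, Nat.not_even_iff_odd]
      at hA
    exact iff_of_true hA hPA
  · rw [if_neg hPA] at hA
    exact iff_of_false (Nat.not_odd_iff_even.2 hA) hPA

theorem exists_ne_of_even_card_filter_erase (hm : 2 ≤ m) (hZ : #Z = 2 * m)
    (heven : ∀ W ⊆ Z, #W = m + 1 → Even #{w ∈ W | P (W.erase w)}) (hA : A ∈ Z.powersetCard m)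
    (hPA : P A) (hPA' : P (Z \ A)) :
    ∃ S ∈ Z.powersetCard m, P S ∧ P (Z \ S) ∧ S ≠ A ∧ S ≠ Z \ A := by
  have hAm := (mem_powersetCard.1 hA).2
  obtain ⟨v, hv⟩ : A.Nonempty := card_pos.1 (by omega)
  -- The degree of `S` in this graph has the parity of `P (Z \ S)`; by the handshake lemma, `A`
  -- cannot be the only vertex of odd degree.
  let G : SimpleGraph {S ∈ Z.powersetCard m | v ∈ S ∧ P S} :=
    { Adj S T := (S : Finset α) ∩ T = {v}
      symm := ⟨fun S T h ↦ by rwa [inter_comm]⟩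
      loopless := ⟨fun S h ↦ by
        have hS := (mem_powersetCard.1 (mem_filter.1 S.2).1).2
        rw [inter_self] at h
        rw [h, card_singleton] at hS
        omega⟩ }
  classical
  have hdegree : ∀ S, G.degree S =
      #{T ∈ Z.powersetCard m | (v ∈ T ∧ P T) ∧ (S : Finset α) ∩ T = {v}} := fun S ↦ by
    rw [← G.card_neighborFinset_eq_degree]
    refine card_bij (fun T _ ↦ T) (fun T hT ↦ ?_) (fun T _ U _ h ↦ Subtype.ext h) fun T hT ↦ ?_
    · obtain ⟨hTZ, hPT⟩ := mem_filter.1 T.2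
      exact mem_filter.2 ⟨hTZ, hPT, (G.mem_neighborFinset S T).1 hT⟩
    · obtain ⟨hTZ, hPT, hST⟩ := mem_filter.1 hT
      exact ⟨⟨T, mem_filter.2 ⟨hTZ, hPT⟩⟩, (G.mem_neighborFinset S _).2 hST, rfl⟩
  have hodd : ∀ S, Odd (G.degree S) ↔ P (Z \ S) := fun S ↦ by
    obtain ⟨hS, hvS, -⟩ := mem_filter.1 S.2
    have hWZ : insert v (Z \ S) ⊆ Z :=
      insert_subset ((mem_powersetCard.1 hS).1 hvS) sdiff_subset
    rw [hdegree, card_filter_inter_eq_singleton hZ hS hvS, odd_card_filter_erase_iff (by simp [hvS])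
      (heven _ hWZ (card_insert_sdiff_eq_add_one hZ hS hvS))]
  obtain ⟨S, hSA, hS⟩ := G.exists_ne_odd_degree_of_exists_odd_degree
    ⟨A, mem_filter.2 ⟨hA, hv, hPA⟩⟩ ((hodd _).2 hPA')
  obtain ⟨hSZ, hvS, hPS⟩ := mem_filter.1 S.2
  refine ⟨S, hSZ, hPS, (hodd S).1 hS, fun h ↦ hSA (Subtype.ext h), fun h ↦ ?_⟩
  rw [h] at hvS
  exact (mem_sdiff.1 hvS).2 hv

end Parity

section Generic

open Finset Module

variable {E : Type*} [AddCommGroup E] [Module ℝ E]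

/-- `p` is generic with respect to `Z` if it lies in no convex hull of at most `dim E` points of
`Z`; when `Z` is in general position, this says that `p` avoids the proper faces of all simplices
spanned by `Z`. -/
def IsGeneric (p : E) (Z : Finset E) : Prop :=
  ∀ S ⊆ Z, #S ≤ finrank ℝ E → p ∉ convexHull ℝ (S : Set E)

/-- The ways of writing `p` as a convex combination of the points of `W`; only the values of the
weight function on `W` matter. -/
def convexWeights (W : Finset E) (p : E) : Set (E → ℝ) :=
  {l | (∀ x ∈ W, 0 ≤ l x) ∧ ∑ x ∈ W, l x = 1 ∧ ∑ x ∈ W, l x • x = p}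

variable {p : E} {W Z : Finset E} {l : E → ℝ} {a b c : E}

theorem IsGeneric.mono (hp : IsGeneric p Z) (hWZ : W ⊆ Z) : IsGeneric p W :=
  fun S hS ↦ hp S (hS.trans hWZ)

theorem mem_convexHull_iff_exists_mem_convexWeights :
    p ∈ convexHull ℝ (W : Set E) ↔ ∃ l, l ∈ convexWeights W p :=
  Finset.mem_convexHull'

theorem mem_convexWeights_erase [DecidableEq E] (hl : l ∈ convexWeights W p) (hla : l a = 0) :
    l ∈ convexWeights (W.erase a) p :=
  ⟨fun x hx ↦ hl.1 x (mem_of_mem_erase hx), by rw [sum_erase W hla, hl.2.1],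
    by rw [sum_erase W (by rw [hla, zero_smul]), hl.2.2]⟩

theorem exists_mem_convexWeights_eq_zero [DecidableEq E] (ha : a ∈ W)
    (hpa : p ∈ convexHull ℝ (W.erase a : Set E)) : ∃ l ∈ convexWeights W p, l a = 0 := by
  obtain ⟨l, hl, hl₁, hlp⟩ := mem_convexHull_iff_exists_mem_convexWeights.1 hpa
  refine ⟨Function.update l a 0, ⟨fun x hx ↦ ?_, ?_, ?_⟩, Function.update_self _ _ _⟩
  · rcases eq_or_ne x a with rfl | hxa
    · simp
    · simpa [hxa] using hl x (mem_erase.2 ⟨hxa, hx⟩)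
  · rw [← add_sum_erase W _ ha, Function.update_self, zero_add, ← hl₁]
    exact sum_congr rfl fun x hx ↦ Function.update_of_ne (ne_of_mem_erase hx) _ _
  · rw [← add_sum_erase W _ ha, Function.update_self, zero_smul, zero_add, ← hlp]
    exact sum_congr rfl fun x hx ↦ by rw [Function.update_of_ne (ne_of_mem_erase hx)]

theorem IsGeneric.pos_of_mem_convexWeights (hp : IsGeneric p W)
    (hW : #W = finrank ℝ E + 2) (hl : l ∈ convexWeights W p) (ha : a ∈ W) (hb : b ∈ W)
    (hab : a ≠ b) (hla : l a = 0) : 0 < l b := by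
  classical
  refine (hl.1 b hb).lt_of_ne' fun hlb ↦ hp ((W.erase a).erase b)
    ((erase_subset _ _).trans (erase_subset _ _)) ?_ (mem_convexHull_iff_exists_mem_convexWeights.2
      ⟨l, mem_convexWeights_erase (mem_convexWeights_erase hl hla) hlb⟩)
  rw [card_erase_of_mem (mem_erase.2 ⟨hab.symm, hb⟩), card_erase_of_mem ha, hW]
  omega

theorem IsGeneric.affineIndependent (hp : IsGeneric p W) (hW : #W ≤ finrank ℝ E + 1)
    (hpW : p ∈ convexHull ℝ (W : Set E)) : AffineIndependent ℝ ((↑) : W → E) := by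
  classical
  by_contra hdep
  obtain ⟨y, hy⟩ := Caratheodory.mem_convexHull_erase hdep hpW
  refine hp (W.erase y) (erase_subset _ _) ?_ hy
  rw [card_erase_of_mem y.2]
  omega

theorem IsGeneric.eq_zero_of_sum_eq_zero [DecidableEq E] (hp : IsGeneric p W)
    (hW : #W = finrank ℝ E + 2) (ha : a ∈ W) (hpa : p ∈ convexHull ℝ (W.erase a : Set E))
    {g : E → ℝ} (hg : ∑ x ∈ W, g x = 0) (hgx : ∑ x ∈ W, g x • x = 0) (hga : g a = 0) :
    ∀ x ∈ W, g x = 0 := by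
  have hind : AffineIndependent ℝ ((↑) : W.erase a → E) :=
    (hp.mono (erase_subset _ _)).affineIndependent (by rw [card_erase_of_mem ha, hW]; rfl) hpa
  intro x hx
  rcases eq_or_ne x a with rfl | hxa
  · exact hga
  · exact hind.eq_zero_of_sum_eq_zero_subtype (by rw [sum_erase W hga, hg])
      (by rw [sum_erase W (by rw [hga, zero_smul]), hgx]) x (mem_erase.2 ⟨hxa, hx⟩)

theorem exists_ne_mem_convexWeights_eq_zero (hl : l ∈ convexWeights W p) (ha : a ∈ W) {g : E → ℝ}
    (hg : ∑ x ∈ W, g x = 0) (hgx : ∑ x ∈ W, g x • x = 0) (hga : 0 < g a) :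
    ∃ b ∈ W, b ≠ a ∧ ∃ m ∈ convexWeights W p, m b = 0 := by
  have hneg : {x ∈ W | g x < 0}.Nonempty := by
    by_contra hempty
    have hnonneg : ∀ x ∈ W, 0 ≤ g x := fun x hx ↦
      not_lt.1 fun hgx ↦ hempty ⟨x, mem_filter.2 ⟨hx, hgx⟩⟩
    exact hga.ne' ((sum_eq_zero_iff_of_nonneg hnonneg).1 hg a ha)
  obtain ⟨b, hb, hmin⟩ := exists_min_image _ (fun x ↦ l x / -g x) hneg
  obtain ⟨hbW, hgb⟩ := mem_filter.1 hb
  have ht : 0 ≤ l b / -g b := div_nonneg (hl.1 b hbW) (neg_nonneg.2 hgb.le)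
  refine ⟨b, hbW, by rintro rfl; exact hga.not_gt hgb, fun x ↦ l x + l b / -g b * g x,
    ⟨fun x hx ↦ ?_, ?_, ?_⟩, ?_⟩
  · rcases lt_or_ge (g x) 0 with hgx | hgx
    · have := (le_div_iff₀ (neg_pos.2 hgx)).1 (hmin x (mem_filter.2 ⟨hx, hgx⟩))
      linarith
    · exact add_nonneg (hl.1 x hx) (mul_nonneg ht hgx)
  · rw [sum_add_distrib, ← mul_sum, hg, mul_zero, add_zero, hl.2.1]
  · simp only [add_smul, mul_smul, sum_add_distrib, ← smul_sum, hgx, smul_zero, add_zero, hl.2.2]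
  · have := hgb.ne
    field_simp
    ring

theorem IsGeneric.exists_ne_mem_convexHull_erase [FiniteDimensional ℝ E] [DecidableEq E]
    (hp : IsGeneric p W) (hW : #W = finrank ℝ E + 2) (ha : a ∈ W)
    (hpa : p ∈ convexHull ℝ (W.erase a : Set E)) :
    ∃ b ∈ W, b ≠ a ∧ p ∈ convexHull ℝ (W.erase b : Set E) := by
  obtain ⟨l, hl, -⟩ := exists_mem_convexWeights_eq_zero ha hpa
  obtain ⟨g, hgx, hg, x, hx, hx₀⟩ :=
    Module.exists_nontrivial_relation_sum_zero_of_finrank_succ_lt_card (R := ℝ) (t := W)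
      (by rw [hW]; exact Nat.lt_succ_self _)
  have hga : g a ≠ 0 := fun hga ↦ hx₀ (hp.eq_zero_of_sum_eq_zero hW ha hpa hg hgx hga x hx)
  suffices ∃ b ∈ W, b ≠ a ∧ ∃ m ∈ convexWeights W p, m b = 0 by
    obtain ⟨b, hb, hba, m, hm, hmb⟩ := this
    exact ⟨b, hb, hba,
      mem_convexHull_iff_exists_mem_convexWeights.2 ⟨m, mem_convexWeights_erase hm hmb⟩⟩
  rcases hga.lt_or_gt with hga | hga
  · exact exists_ne_mem_convexWeights_eq_zero hl ha (g := -g) (by simp [hg]) (by simp [hgx])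
      (by simpa using hga)
  · exact exists_ne_mem_convexWeights_eq_zero hl ha hg hgx hga

theorem IsGeneric.notMem_convexHull_erase [DecidableEq E] (hp : IsGeneric p W)
    (hW : #W = finrank ℝ E + 2) (ha : a ∈ W) (hb : b ∈ W) (hc : c ∈ W) (hab : a ≠ b) (hac : a ≠ c)
    (hbc : b ≠ c) (hpa : p ∈ convexHull ℝ (W.erase a : Set E))
    (hpb : p ∈ convexHull ℝ (W.erase b : Set E)) : p ∉ convexHull ℝ (W.erase c : Set E) := by
  intro hpc
  obtain ⟨u, hu, hua⟩ := exists_mem_convexWeights_eq_zero ha hpa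
  obtain ⟨v, hv, hvb⟩ := exists_mem_convexWeights_eq_zero hb hpb
  obtain ⟨w, hw, hwc⟩ := exists_mem_convexWeights_eq_zero hc hpc
  -- An affine dependency vanishing at `a`; its values at `b` and `c` compare `w a` and `v a` in
  -- opposite ways.
  have hzero : ∀ x ∈ W, w a * v x - v a * w x - (w a - v a) * u x = 0 := by
    refine hp.eq_zero_of_sum_eq_zero hW ha hpa ?_ ?_ (by rw [hua]; ring)
    · simp only [sum_sub_distrib, ← mul_sum, hu.2.1, hv.2.1, hw.2.1]
      ring
    · simp only [sub_smul, mul_smul, sum_sub_distrib, ← smul_sum, hu.2.2, hv.2.2, hw.2.2]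
      module
  have hb₀ := hzero b hb
  have hc₀ := hzero c hc
  rw [hvb] at hb₀
  rw [hwc] at hc₀
  have hub := hp.pos_of_mem_convexWeights hW hu ha hb hab hua
  have huc := hp.pos_of_mem_convexWeights hW hu ha hc hac hua
  have hva := hp.pos_of_mem_convexWeights hW hv hb ha hab.symm hvb
  have hvc := hp.pos_of_mem_convexWeights hW hv hb hc hbc hvb
  have hwa := hp.pos_of_mem_convexWeights hW hw hc ha hac.symm hwc
  have hwb := hp.pos_of_mem_convexWeights hW hw hc hb hbc.symm hwc
  have hlt : w a < v a := by nlinarith [mul_pos hva hwb]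
  have hgt : v a < w a := by nlinarith [mul_pos hwa hvc]
  exact hlt.not_gt hgt

theorem IsGeneric.even_card_filter_mem_convexHull_erase [FiniteDimensional ℝ E] [DecidableEq E]
    [DecidablePred fun S : Finset E ↦ p ∈ convexHull ℝ (S : Set E)]
    (hp : IsGeneric p W) (hW : #W = finrank ℝ E + 2) :
    Even #{w ∈ W | p ∈ convexHull ℝ (W.erase w : Set E)} := by
  have hle : #{w ∈ W | p ∈ convexHull ℝ (W.erase w : Set E)} ≤ 2 := by
    by_contra! hlt
    obtain ⟨a, b, c, ha, hb, hc, hab, hac, hbc⟩ := two_lt_card_iff.1 hlt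
    rw [mem_filter] at ha hb hc
    exact hp.notMem_convexHull_erase hW ha.1 hb.1 hc.1 hab hac hbc ha.2 hb.2 hc.2
  have hne : #{w ∈ W | p ∈ convexHull ℝ (W.erase w : Set E)} ≠ 1 := fun hone ↦ by
    obtain ⟨a, ha⟩ := card_eq_one.1 hone
    have hmem : a ∈ W ∧ p ∈ convexHull ℝ (W.erase a : Set E) :=
      mem_filter.1 (ha ▸ mem_singleton_self a)
    obtain ⟨b, hb, hba, hpb⟩ := hp.exists_ne_mem_convexHull_erase hW hmem.1 hmem.2
    exact hba (mem_singleton.1 (ha ▸ mem_filter.2 ⟨hb, hpb⟩))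
  interval_cases #{w ∈ W | p ∈ convexHull ℝ (W.erase w : Set E)}
  · exact Even.zero
  · exact absurd rfl hne
  · exact even_two

end Generic

section GenericDense

open Finset Module

variable {E : Type*} [NormedAddCommGroup E] [NormedSpace ℝ E] [FiniteDimensional ℝ E]

theorem interior_convexHull_eq_empty_of_card_le_finrank {S : Finset E} (hS : #S ≤ finrank ℝ E) :
    interior (convexHull ℝ (S : Set E)) = ∅ := by
  by_contra hne
  rw [← Ne, ← Set.nonempty_iff_ne_empty,
    interior_convexHull_nonempty_iff_affineSpan_eq_top] at hne
  classical
  have hpos : 0 < #S :=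
    card_pos.2 (coe_nonempty.1 (AffineSubspace.nonempty_of_affineSpan_eq_top ℝ E E hne))
  have hle := finrank_vectorSpan_image_finset_le ℝ id S (n := #S - 1) (by omega)
  rw [image_id, ← direction_affineSpan, hne, AffineSubspace.direction_top, finrank_top] at hle
  omega

theorem dense_setOf_isGeneric (Z : Finset E) : Dense {p | IsGeneric p Z} := by
  have heq : {p | IsGeneric p Z} =
      ⋂ S ∈ {S | S ⊆ Z ∧ #S ≤ finrank ℝ E}, (convexHull ℝ (S : Set E))ᶜ := by
    ext p
    simp [IsGeneric]
  rw [heq]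
  refine dense_biInter_of_isOpen
    (fun S _ ↦ (S.finite_toSet.isClosed_convexHull ℝ).isOpen_compl)
    (Z.powerset.finite_toSet.subset fun S hS ↦ mem_powerset.2 hS.1).countable fun S hS ↦ ?_
  rw [← interior_eq_empty_iff_dense_compl]
  exact interior_convexHull_eq_empty_of_card_le_finrank hS.2

end GenericDense

section GeneralPosition

open Finset Module

variable {E : Type*}

/-- Coordinate-free form of `InGeneralPosition` for finite subsets of a vector space, with `dim E`
in place of `d`. -/
def IsGeneralPosition [AddCommGroup E] [Module ℝ E] (X : Finset E) : Prop :=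
  ∀ s ⊆ X, #s ≤ finrank ℝ E + 1 → AffineIndependent ℝ ((↑) : s → E)

theorem IsGeneralPosition.mono [AddCommGroup E] [Module ℝ E] {X Y : Finset E}
    (hX : IsGeneralPosition X) (hYX : Y ⊆ X) : IsGeneralPosition Y :=
  fun s hs ↦ hX s (hs.trans hYX)

theorem IsGeneralPosition.card_filter_apply_eq_le [AddCommGroup E] [Module ℝ E]
    [FiniteDimensional ℝ E] {X : Finset E} (hX : IsGeneralPosition X) {f : E →ₗ[ℝ] ℝ} (hf : f ≠ 0)
    (u : ℝ) : #{x ∈ X | f x = u} ≤ finrank ℝ E := by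
  by_contra! hlt
  obtain ⟨t, ht, htcard⟩ := exists_subset_card_eq (Nat.succ_le_of_lt hlt)
  have hle := card_le_finrank_of_affineIndependent_of_apply_eq
    (hX t (ht.trans (filter_subset _ _)) htcard.le) hf fun x hx ↦ (mem_filter.1 (ht hx)).2
  omega

theorem IsGeneralPosition.notMem_convexHull_of_le_of_le [AddCommGroup E] [Module ℝ E]
    [FiniteDimensional ℝ E] [DecidableEq E] {A B : Finset E} (hAB : IsGeneralPosition (A ∪ B))
    (hdisj : Disjoint A B) {f : E →ₗ[ℝ] ℝ} (hf : f ≠ 0) {p : E} (hA : ∀ x ∈ A, f x ≤ f p)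
    (hB : ∀ x ∈ B, f p ≤ f x) (hpA : p ∈ convexHull ℝ (A : Set E)) :
    p ∉ convexHull ℝ (B : Set E) := by
  intro hpB
  have hpA' : p ∈ convexHull ℝ (({x ∈ A | f x = f p} : Finset E) : Set E) := by
    rw [coe_filter]
    exact mem_convexHull_sep_eq_of_le hA hpA
  have hpB' : p ∈ convexHull ℝ (({x ∈ B | f x = f p} : Finset E) : Set E) := by
    rw [coe_filter]
    simpa using mem_convexHull_sep_eq_of_le (f := -f) (fun x hx ↦ neg_le_neg (hB x hx)) hpB
  have hind : AffineIndependent ℝ ((↑) : {x ∈ A ∪ B | f x = f p} → E) :=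
    hAB _ (filter_subset _ _) ((hAB.card_filter_apply_eq_le hf _).trans (Nat.le_succ _))
  have hempty : {x ∈ A | f x = f p} ∩ {x ∈ B | f x = f p} = ∅ :=
    disjoint_iff_inter_eq_empty.1 (disjoint_filter_filter hdisj)
  have hmem := Set.mem_inter hpA' hpB'
  rw [← hind.convexHull_inter (filter_subset_filter _ subset_union_left)
    (filter_subset_filter _ subset_union_right), ← coe_inter, hempty, coe_empty,
    convexHull_empty] at hmem
  exact hmem

variable [NormedAddCommGroup E] [NormedSpace ℝ E] [FiniteDimensional ℝ E]

theorem interior_convexHull_nonempty_of_affineIndependent {S : Finset E}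
    (hS : AffineIndependent ℝ ((↑) : S → E)) (hcard : #S = finrank ℝ E + 1) :
    (interior (convexHull ℝ (S : Set E))).Nonempty := by
  rw [interior_convexHull_nonempty_iff_affineSpan_eq_top]
  simpa using hS.affineSpan_eq_top_iff_card_eq_finrank_add_one.2 (by simpa using hcard)

theorem IsGeneralPosition.interior_inter_interior_nonempty [DecidableEq E] {A B : Finset E}
    (hAB : IsGeneralPosition (A ∪ B)) (hdisj : Disjoint A B)
    (hA : #A = finrank ℝ E + 1) (hB : #B = finrank ℝ E + 1) {p : E}
    (hpA : p ∈ convexHull ℝ (A : Set E)) (hpB : p ∈ convexHull ℝ (B : Set E)) :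
    (interior (convexHull ℝ (A : Set E)) ∩ interior (convexHull ℝ (B : Set E))).Nonempty := by
  have hintA := interior_convexHull_nonempty_of_affineIndependent
    (hAB A subset_union_left hA.le) hA
  have hintB := interior_convexHull_nonempty_of_affineIndependent
    (hAB B subset_union_right hB.le) hB
  by_contra hempty
  rw [Set.not_nonempty_iff_eq_empty, ← Set.disjoint_iff_inter_eq_empty] at hempty
  have hAB' : Disjoint (interior (convexHull ℝ (A : Set E))) (convexHull ℝ (B : Set E)) := by
    refine (hempty.closure_right isOpen_interior).mono_right ?_
    rw [(convex_convexHull ℝ _).closure_interior_eq_closure_of_nonempty_interior hintB]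
    exact subset_closure
  obtain ⟨f, u, hf, hfA, hfB⟩ := geometric_hahn_banach_of_nonempty_interior (convex_convexHull ℝ _)
    (convex_convexHull ℝ _) hAB' hintA ⟨p, hpB⟩
  have hfp : f p = u := le_antisymm (hfA p hpA) (hfB p hpB)
  have hf' : f.toLinearMap ≠ 0 := fun h ↦ hf (ContinuousLinearMap.coe_injective h)
  exact hAB.notMem_convexHull_of_le_of_le hdisj hf'
    (fun x hx ↦ (hfA x (subset_convexHull ℝ _ hx)).trans_eq hfp.symm)
    (fun x hx ↦ hfp.trans_le (hfB x (subset_convexHull ℝ _ hx))) hpA hpB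

end GeneralPosition

section Repartition

open Finset Module

variable {E : Type*} [DecidableEq E] {A B : Finset E} {p : E}

theorem IsGeneric.exists_repartition [AddCommGroup E] [Module ℝ E] [FiniteDimensional ℝ E]
    (hp : IsGeneric p (A ∪ B)) (hE : 1 ≤ finrank ℝ E) (hdisj : Disjoint A B)
    (hA : #A = finrank ℝ E + 1) (hB : #B = finrank ℝ E + 1)
    (hpA : p ∈ convexHull ℝ (A : Set E)) (hpB : p ∈ convexHull ℝ (B : Set E)) :
    ∃ S ∈ (A ∪ B).powersetCard (finrank ℝ E + 1), p ∈ convexHull ℝ (S : Set E) ∧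
      p ∈ convexHull ℝ (((A ∪ B) \ S : Finset E) : Set E) ∧ S ≠ A ∧ S ≠ B := by
  classical
  have hcard : #(A ∪ B) = 2 * (finrank ℝ E + 1) := by
    rw [card_union_of_disjoint hdisj, hA, hB, two_mul]
  have hsdiff : (A ∪ B) \ A = B := union_sdiff_cancel_left hdisj
  obtain ⟨S, hS, hpS, hpS', hSA, hSB⟩ := exists_ne_of_even_card_filter_erase
    (P := fun S ↦ p ∈ convexHull ℝ (S : Set E)) (Nat.succ_le_succ hE) hcard
    (fun W hW hWcard ↦ (hp.mono hW).even_card_filter_mem_convexHull_erase hWcard)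
    (mem_powersetCard.2 ⟨subset_union_left, hA⟩) hpA (by rwa [hsdiff])
  exact ⟨S, hS, hpS, hpS', hSA, by rwa [hsdiff] at hSB⟩

variable [NormedAddCommGroup E] [NormedSpace ℝ E] [FiniteDimensional ℝ E]

theorem IsGeneralPosition.exists_repartition (hAB : IsGeneralPosition (A ∪ B))
    (hE : 1 ≤ finrank ℝ E) (hdisj : Disjoint A B) (hA : #A = finrank ℝ E + 1)
    (hB : #B = finrank ℝ E + 1) (hpA : p ∈ convexHull ℝ (A : Set E))
    (hpB : p ∈ convexHull ℝ (B : Set E)) :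
    ∃ S ∈ (A ∪ B).powersetCard (finrank ℝ E + 1), p ∈ convexHull ℝ (S : Set E) ∧
      p ∈ convexHull ℝ (((A ∪ B) \ S : Finset E) : Set E) ∧ S ≠ A ∧ S ≠ B := by
  let K := convexHull ℝ (A : Set E) ∩ convexHull ℝ (B : Set E)
  let C := ⋃ S ∈ {S ∈ (A ∪ B).powersetCard (finrank ℝ E + 1) | S ≠ A ∧ S ≠ B},
    convexHull ℝ (S : Set E) ∩ convexHull ℝ (((A ∪ B) \ S : Finset E) : Set E)
  have hC : IsClosed C := isClosed_biUnion_finset fun S _ ↦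
    (S.finite_toSet.isClosed_convexHull ℝ).inter (finite_toSet _ |>.isClosed_convexHull ℝ)
  have hKC : interior K ∩ {q | IsGeneric q (A ∪ B)} ⊆ C := fun q ⟨hqK, hq⟩ ↦ by
    obtain ⟨hqA, hqB⟩ := interior_subset hqK
    obtain ⟨S, hS, hqS, hqS', hSA, hSB⟩ := hq.exists_repartition hE hdisj hA hB hqA hqB
    exact Set.mem_biUnion (mem_coe.2 (mem_filter.2 ⟨hS, hSA, hSB⟩)) ⟨hqS, hqS'⟩
  have hK : Convex ℝ K := (convex_convexHull ℝ _).inter (convex_convexHull ℝ _)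
  have hintK : (interior K).Nonempty := by
    rw [interior_inter]
    exact hAB.interior_inter_interior_nonempty hdisj hA hB hpA hpB
  have hpC : p ∈ C := by
    have hp : p ∈ closure (interior K) := by
      rw [hK.closure_interior_eq_closure_of_nonempty_interior hintK]
      exact subset_closure ⟨hpA, hpB⟩
    have hsub : interior K ⊆ C :=
      ((dense_setOf_isGeneric (A ∪ B)).open_subset_closure_inter isOpen_interior).trans
        (hC.closure_subset_iff.2 hKC)
    exact hC.closure_subset_iff.2 hsub hp
  obtain ⟨S, hS, hpS, hpS'⟩ := Set.mem_iUnion₂.1 hpC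
  obtain ⟨hS, hSA, hSB⟩ := mem_filter.1 hS
  exact ⟨S, hS, hpS, hpS', hSA, hSB⟩

end Repartition

section Crossing

variable {E : Type*}

theorem inter_frontier_nonempty_of_isPreconnected [TopologicalSpace E] {s t : Set E}
    (hs : IsPreconnected s) (hst : (s ∩ t).Nonempty) (hst' : ¬s ⊆ t) :
    (s ∩ frontier t).Nonempty := by
  by_contra hempty
  have hcover : s ⊆ interior t ∪ (closure t)ᶜ := fun x hx ↦ by
    by_contra hxt
    simp only [Set.mem_union, Set.mem_compl_iff, not_or, not_not] at hxt
    exact hempty ⟨x, hx, hxt.2, hxt.1⟩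
  have hdisj : Disjoint (interior t) (closure t)ᶜ :=
    Set.disjoint_compl_right_iff_subset.2 (interior_subset.trans subset_closure)
  rcases hs.subset_or_subset isOpen_interior isClosed_closure.isOpen_compl hdisj hcover with h | h
  · exact hst' (h.trans interior_subset)
  · obtain ⟨x, hxs, hxt⟩ := hst
    exact h hxs (subset_closure hxt)

variable [NormedAddCommGroup E] [NormedSpace ℝ E]

theorem isPreconnected_frontier_of_convex {K : Set E} (hK : Convex ℝ K)
    (hb : Bornology.IsBounded K) (hE : 1 < Module.rank ℝ E) : IsPreconnected (frontier K) := by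
  rcases (interior K).eq_empty_or_nonempty with hint | hint
  · rw [frontier, hint, Set.sdiff_empty]
    exact hK.closure.isPreconnected
  · obtain ⟨h, -, -, hfrontier⟩ :=
      exists_homeomorph_image_interior_closure_frontier_eq_unitBall hK hint hb
    rw [← h.isPreconnected_image, hfrontier]
    exact isPreconnected_sphere hE 0 1

theorem subset_of_frontier_subset [Nontrivial E] {K L : Set E} (hK : IsCompact K)
    (hKc : Convex ℝ K) (hL : IsClosed L) (hLc : Convex ℝ L) (hKL : frontier K ⊆ L) : K ⊆ L := by
  have hextreme : K.extremePoints ℝ ⊆ frontier K := fun x hx ↦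
    ⟨subset_closure hx.1, fun hxint ↦ (disjoint_interior_extremePoints K).ne_of_mem hxint hx rfl⟩
  rw [← closure_convexHull_extremePoints hK hKc]
  exact closure_minimal (convexHull_min (hextreme.trans hKL) hLc) hL

theorem frontier_inter_frontier_nonempty {K L : Set E} (hE : 1 < Module.rank ℝ E)
    (hK : IsCompact K) (hKc : Convex ℝ K) (hL : IsClosed L) (hLc : Convex ℝ L)
    (hmeet : (K ∩ L).Nonempty) (hKL : ¬K ⊆ L) (hLK : ¬L ⊆ K) :
    (frontier K ∩ frontier L).Nonempty := by
  have : Nontrivial E := rank_pos_iff_nontrivial.1 (zero_lt_one.trans hE)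
  have hLfrontier : (L ∩ frontier K).Nonempty :=
    inter_frontier_nonempty_of_isPreconnected hLc.isPreconnected (Set.inter_comm K L ▸ hmeet) hLK
  exact inter_frontier_nonempty_of_isPreconnected
    (isPreconnected_frontier_of_convex hKc hK.isBounded hE) (Set.inter_comm L _ ▸ hLfrontier)
    fun h ↦ hKL (subset_of_frontier_subset hK hKc hL hLc h)

end Crossing

section Potential

open Finset Module

variable {E : Type*} [NormedAddCommGroup E] [NormedSpace ℝ E] {X A B : Finset E} {p : E}

theorem mem_extremePoints_convexHull_of_affineIndependent {b : E}
    (hB : AffineIndependent ℝ ((↑) : B → E)) (hb : b ∈ B) :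
    b ∈ (convexHull ℝ (B : Set E)).extremePoints ℝ := by
  by_contra hext
  have hsub : (convexHull ℝ (B : Set E)).extremePoints ℝ ⊆ (B : Set E) \ {b} := fun x hx ↦
    ⟨extremePoints_convexHull_subset hx, by rintro rfl; exact hext hx⟩
  have hb' : b ∈ convexHull ℝ ((B : Set E) \ {b}) := by
    have hmem := subset_convexHull ℝ (B : Set E) hb
    rw [← closure_convexHull_extremePoints (B.finite_toSet.isCompact_convexHull ℝ)
      (convex_convexHull ℝ _)] at hmem
    exact closure_minimal (convexHull_mono hsub)
      ((B.finite_toSet.subset Set.sdiff_subset).isClosed_convexHull ℝ) hmem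
  refine hB.notMem_affineSpan_sdiff ⟨b, hb⟩ Set.univ ?_
  rw [Set.image_sdiff Subtype.val_injective, Set.image_univ, Subtype.range_coe,
    Set.image_singleton]
  exact convexHull_subset_affineSpan _ hb'

/-- The number of points of `X` in the convex hull of `S`; a Tverberg family `T` is improved by
decreasing `∑ i, 2 ^ hullCard X (T i)`. -/
noncomputable def hullCard (X S : Finset E) : ℕ :=
  (↑X ∩ convexHull ℝ (S : Set E)).ncard

theorem hullCard_lt_hullCard {S : Finset E} {b : E} (hB : AffineIndependent ℝ ((↑) : B → E))
    (hBX : B ⊆ X) (hSB : (S : Set E) ⊆ convexHull ℝ (B : Set E)) (hb : b ∈ B) (hbS : b ∉ S) :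
    hullCard X S < hullCard X B := by
  refine Set.ncard_lt_ncard ⟨Set.inter_subset_inter_right _ ?_, fun hle ↦ ?_⟩
    (X.finite_toSet.inter_of_left _)
  · exact convexHull_min hSB (convex_convexHull ℝ _)
  · have hext := mem_extremePoints_convexHull_of_affineIndependent hB hb
    rw [(convex_convexHull ℝ _).mem_extremePoints_iff_mem_sdiff_convexHull_sdiff] at hext
    have hbS' : b ∈ convexHull ℝ (S : Set E) := (hle ⟨hBX hb, hext.1⟩).2
    refine hext.2 (convexHull_mono (fun x hx ↦ ?_) hbS')
    exact ⟨hSB hx, by rintro rfl; exact hbS hx⟩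

theorem IsGeneralPosition.exists_repartition_hullCard_lt [FiniteDimensional ℝ E] [DecidableEq E]
    (hAB : IsGeneralPosition (A ∪ B)) (hABX : A ∪ B ⊆ X) (hE : 1 ≤ finrank ℝ E)
    (hdisj : Disjoint A B) (hA : #A = finrank ℝ E + 1) (hB : #B = finrank ℝ E + 1)
    (hpA : p ∈ convexHull ℝ (A : Set E))
    (hsub : convexHull ℝ (A : Set E) ⊆ convexHull ℝ (B : Set E)) :
    ∃ S ∈ (A ∪ B).powersetCard (finrank ℝ E + 1), p ∈ convexHull ℝ (S : Set E) ∧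
      p ∈ convexHull ℝ (((A ∪ B) \ S : Finset E) : Set E) ∧ hullCard X S < hullCard X B ∧
      hullCard X ((A ∪ B) \ S) < hullCard X B := by
  obtain ⟨S, hS, hpS, hpS', hSA, hSB⟩ := hAB.exists_repartition hE hdisj hA hB hpA (hsub hpA)
  have hAB' : ((A ∪ B : Finset E) : Set E) ⊆ convexHull ℝ (B : Set E) := by
    rw [coe_union]
    exact Set.union_subset ((subset_convexHull ℝ _).trans hsub) (subset_convexHull ℝ _)
  have hlt : ∀ U ⊆ A ∪ B, ¬B ⊆ U → hullCard X U < hullCard X B := fun U hU hBU ↦ by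
    obtain ⟨b, hb, hbU⟩ := not_subset.1 hBU
    exact hullCard_lt_hullCard (hAB B subset_union_right hB.le) (subset_union_right.trans hABX)
      ((coe_subset.2 hU).trans hAB') hb hbU
  obtain ⟨hSZ, hScard⟩ := mem_powersetCard.1 hS
  refine ⟨S, hS, hpS, hpS', hlt S hSZ fun h ↦ ?_, hlt _ sdiff_subset fun h ↦ ?_⟩
  · exact hSB (eq_of_subset_of_card_le h (by rw [hScard, hB])).symm
  · have hSA' : S ⊆ A := by grind
    exact hSA (eq_of_subset_of_card_le hSA' (by rw [hScard, hA]))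

theorem two_pow_add_two_pow_le {a b c : ℕ} (ha : a < c) (hb : b < c) : 2 ^ a + 2 ^ b ≤ 2 ^ c := by
  obtain ⟨c, rfl⟩ := Nat.exists_eq_add_of_lt (Nat.zero_lt_of_lt ha)
  rw [zero_add, pow_succ, mul_two]
  gcongr <;> omega

end Potential

section Update

open Finset Module
open scoped Function

variable {E κ : Type*} [DecidableEq κ] {i j : κ}

theorem sum_update_update_lt_sum {α : Type*} [Fintype κ] (hij : i ≠ j) {f : α → ℕ} {T : κ → α}
    {a b : α} (hf : f a + f b < f (T i) + f (T j)) :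
    ∑ k, f (Function.update (Function.update T i a) j b k) < ∑ k, f (T k) := by
  have hsplit : ∀ g : κ → ℕ, ∑ k, g k = g i + g j + ∑ k ∈ (univ.erase i).erase j, g k := fun g ↦ by
    rw [add_assoc, add_sum_erase _ _ (by simp [hij.symm]), add_sum_erase _ _ (mem_univ i)]
  have hrest : ∑ k ∈ (univ.erase i).erase j, f (Function.update (Function.update T i a) j b k) =
      ∑ k ∈ (univ.erase i).erase j, f (T k) := sum_congr rfl fun k hk ↦ by
    have := mem_erase.1 hk
    have := mem_erase.1 this.2
    grind
  rw [hsplit, hsplit fun k ↦ f (T k), hrest]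
  simpa [hij] using hf

theorem pairwise_disjoint_update_update {α : Type*} [DecidableEq α] {T : κ → Finset α}
    (hT : Pairwise (Disjoint on T)) {A : Finset α} (hA : A ⊆ T i ∪ T j) :
    Pairwise (Disjoint on Function.update (Function.update T i A) j ((T i ∪ T j) \ A)) := by
  have hinj : ∀ k l x, x ∈ T k → x ∈ T l → k = l := fun k l x hk hl ↦
    hT.eq (not_disjoint_iff.2 ⟨x, hk, hl⟩)
  refine fun k l hkl ↦ disjoint_left.2 fun x hxk hxl ↦ ?_
  rw [Function.update_apply] at hxk hxl
  rw [Function.update_apply] at hxk hxl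
  grind

theorem forall_update_update {α : Type*} (P : α → Prop) {T : κ → α} {a b : α}
    (hT : ∀ k, P (T k)) (ha : P a) (hb : P b) (k : κ) :
    P (Function.update (Function.update T i a) j b k) :=
  (Function.forall_update_iff _ fun _ ↦ P).2
    ⟨hb, fun k _ ↦ (Function.forall_update_iff _ fun _ ↦ P).2 ⟨ha, fun k _ ↦ hT k⟩ k⟩ k

theorem IsTverbergFamily.update_update [AddCommGroup E] [Module ℝ E] [DecidableEq E]
    {X A : Finset E} {p : E} {T : κ → Finset E} (hT : IsTverbergFamily X p T) (hij : i ≠ j)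
    (hA : A ∈ (T i ∪ T j).powersetCard (finrank ℝ E + 1)) (hpA : p ∈ convexHull ℝ (A : Set E))
    (hpA' : p ∈ convexHull ℝ (((T i ∪ T j) \ A : Finset E) : Set E)) :
    IsTverbergFamily X p (Function.update (Function.update T i A) j ((T i ∪ T j) \ A)) := by
  obtain ⟨hAT, hAcard⟩ := mem_powersetCard.1 hA
  have hAcard' : #((T i ∪ T j) \ A) = finrank ℝ E + 1 := by
    rw [card_sdiff_of_subset hAT, card_union_of_disjoint (hT.pairwise_disjoint hij), hT.card_eq,
      hT.card_eq, hAcard, Nat.add_sub_cancel]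
  have hTX : T i ∪ T j ⊆ X := union_subset (hT.subset i) (hT.subset j)
  exact
    { subset := forall_update_update (· ⊆ X) hT.subset (hAT.trans hTX) (sdiff_subset.trans hTX)
      card_eq := forall_update_update (fun S ↦ #S = finrank ℝ E + 1) hT.card_eq hAcard hAcard'
      pairwise_disjoint := pairwise_disjoint_update_update hT.pairwise_disjoint hAT
      mem_convexHull := forall_update_update (fun S : Finset E ↦ p ∈ convexHull ℝ (S : Set E))
        hT.mem_convexHull hpA hpA' }

end Update

section Main

open Finset Module
open scoped Function

variable {E κ : Type*} [NormedAddCommGroup E] [NormedSpace ℝ E] [FiniteDimensional ℝ E]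
  {X : Finset E} {p : E}

theorem IsTverbergFamily.exists_sum_two_pow_hullCard_lt [Fintype κ] {T : κ → Finset E}
    (hT : IsTverbergFamily X p T) (hX : IsGeneralPosition X) (hE : 1 ≤ finrank ℝ E) {i j : κ}
    (hij : i ≠ j) (hsub : convexHull ℝ (T i : Set E) ⊆ convexHull ℝ (T j : Set E)) :
    ∃ T' : κ → Finset E, IsTverbergFamily X p T' ∧
      ∑ k, 2 ^ hullCard X (T' k) < ∑ k, 2 ^ hullCard X (T k) := by
  classical
  have hTX : T i ∪ T j ⊆ X := union_subset (hT.subset i) (hT.subset j)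
  obtain ⟨A, hA, hpA, hpA', hlt, hlt'⟩ := (hX.mono hTX).exists_repartition_hullCard_lt hTX hE
    (hT.pairwise_disjoint hij) (hT.card_eq i) (hT.card_eq j) (hT.mem_convexHull i) hsub
  refine ⟨_, hT.update_update hij hA hpA hpA',
    sum_update_update_lt_sum hij (f := fun S ↦ 2 ^ hullCard X S) ?_⟩
  calc 2 ^ hullCard X A + 2 ^ hullCard X ((T i ∪ T j) \ A)
      ≤ 2 ^ hullCard X (T j) := two_pow_add_two_pow_le hlt hlt'
    _ < 2 ^ hullCard X (T i) + 2 ^ hullCard X (T j) := Nat.lt_add_of_pos_left (by positivity)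

theorem exists_isTverbergFamily_pairwise_not_subset [Fintype κ] [Nonempty κ]
    (hX : IsGeneralPosition X) (hE : 1 ≤ finrank ℝ E)
    (hcard : Fintype.card κ * (finrank ℝ E + 1) ≤ #X) :
    ∃ (p : E) (T : κ → Finset E), IsTverbergFamily X p T ∧
      Pairwise fun i j ↦ ¬convexHull ℝ (T i : Set E) ⊆ convexHull ℝ (T j : Set E) := by
  obtain ⟨p, T₀, hT₀⟩ := exists_isTverbergFamily (κ := κ) hcard
  obtain ⟨T, hT, hmin⟩ := exists_minimalFor_of_wellFoundedLT (IsTverbergFamily X p)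
    (fun T : κ → Finset E ↦ ∑ k, 2 ^ hullCard X (T k)) ⟨T₀, hT₀⟩
  refine ⟨p, T, hT, fun i j hij hsub ↦ ?_⟩
  obtain ⟨T', hT', hlt⟩ := hT.exists_sum_two_pow_hullCard_lt hX hE hij hsub
  exact hlt.not_ge (hmin hT' hlt.le)

theorem pairwise_crossing_simplices_general [Fintype κ] (hE : 2 ≤ finrank ℝ E)
    (hX : IsGeneralPosition X) (hcard : Fintype.card κ * (finrank ℝ E + 1) ≤ #X) :
    ∃ (p : E) (T : κ → Finset E), IsTverbergFamily X p T ∧ Pairwise fun i j ↦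
      (frontier (convexHull ℝ (T i : Set E)) ∩ frontier (convexHull ℝ (T j : Set E))).Nonempty := by
  rcases isEmpty_or_nonempty κ with _ | _
  · exact ⟨0, isEmptyElim, ⟨isEmptyElim, isEmptyElim, Subsingleton.pairwise, isEmptyElim⟩,
      Subsingleton.pairwise⟩
  obtain ⟨p, T, hT, hsub⟩ := exists_isTverbergFamily_pairwise_not_subset (κ := κ) hX
    (one_le_two.trans hE) hcard
  have hrank : 1 < Module.rank ℝ E := by
    rw [← finrank_eq_rank]
    exact_mod_cast hE
  refine ⟨p, T, hT, fun i j hij ↦ ?_⟩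
  exact frontier_inter_frontier_nonempty hrank ((T i).finite_toSet.isCompact_convexHull ℝ)
    (convex_convexHull ℝ _) ((T j).finite_toSet.isClosed_convexHull ℝ) (convex_convexHull ℝ _)
    ⟨p, hT.mem_convexHull i, hT.mem_convexHull j⟩ (hsub hij) (hsub hij.symm)

end Main

/-- For `d ≥ 2`, every set of `n` points in general position in `ℝ^d` spans
`⌊n/(d+1)⌋` vertex-disjoint simplices that are pairwise crossing, i.e. the
topological boundaries of their convex hulls pairwise intersect. -/
theorem pairwise_crossing_simplices (d n : ℕ) (hd : 2 ≤ d)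
    (X : Finset (EuclideanSpace ℝ (Fin d))) (hcard : X.card = n)
    (hgp : InGeneralPosition d (↑X : Set (EuclideanSpace ℝ (Fin d)))) :
    ∃ T : Fin (n / (d + 1)) → Finset (EuclideanSpace ℝ (Fin d)),
      (∀ i, T i ⊆ X) ∧
      (∀ i, (T i).card = d + 1) ∧
      (∀ i j, i ≠ j → Disjoint (T i) (T j)) ∧
      (∀ i j, i ≠ j →
        (frontier (convexHull ℝ (↑(T i) : Set (EuclideanSpace ℝ (Fin d)))) ∩
          frontier (convexHull ℝ (↑(T j) : Set (EuclideanSpace ℝ (Fin d))))).Nonempty) := by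
  have hgp' : IsGeneralPosition X := fun s hs hscard ↦
    hgp s (Finset.coe_subset.2 hs) (by simpa using hscard)
  obtain ⟨p, T, hT, hcross⟩ := pairwise_crossing_simplices_general (κ := Fin (n / (d + 1)))
    (by simpa using hd) hgp' (by simpa [hcard] using Nat.div_mul_le_self n (d + 1))
  exact ⟨T, hT.subset, by simpa using hT.card_eq, hT.pairwise_disjoint, hcross⟩
end
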